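/- There exists a universal constant c > 0 such that the following holds. Let w be a log-concave function on ℝ^m with 0 < ∫w < ∞, w(0) > 0, and barycenter at the origin, and let q ≥ 1. Then for every unit vector θ ∈ ℝ^m: (vol(K_{m+q}(w) ∩ H_θ⁺)/vol(K_{m+q}(w)))^{1/q} ≥ c, where H_θ⁺ := {x ∈ ℝ^m : ⟨x,θ⟩ ≥ 0}. -/

import Mathlib

open MeasureTheory ProbabilityTheory Real
open scoped ENNReal RealInnerProductSpace Pointwise NNReal

noncomputable section

/-- A nonnegative function is log-concave if `f(λx+(1-λ)y) ≥ f(x)^λ f(y)^{1-λ}`. -/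
def IsLogConcaveFn {E : Type*} [AddCommGroup E] [Module ℝ E] (f : E → ℝ) : Prop :=
  (∀ x, 0 ≤ f x) ∧
  ∀ x y : E, ∀ l : ℝ, 0 ≤ l → l ≤ 1 →
    f x ^ l * f y ^ (1 - l) ≤ f (l • x + (1 - l) • y)

/-- Hilbert-Schmidt (Frobenius) norm of a matrix. -/
def hsNorm {n : ℕ} (A : Matrix (Fin n) (Fin n) ℝ) : ℝ :=
  Real.sqrt (∑ i, ∑ j, (A i j) ^ 2)

/-- Operator norm of a matrix acting on Euclidean space. -/
def opNorm {n : ℕ} (A : Matrix (Fin n) (Fin n) ℝ) : ℝ :=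
  ‖LinearMap.toContinuousLinearMap (Matrix.toEuclideanLin A)‖

/-- Application of a matrix to a Euclidean vector. -/
def mApp {n : ℕ} (A : Matrix (Fin n) (Fin n) ℝ) (x : EuclideanSpace ℝ (Fin n)) :
    EuclideanSpace ℝ (Fin n) := Matrix.toEuclideanLin A x

/-- The random vector `X` has density `f` with respect to Lebesgue measure. -/
def HasDensityFn {Ω : Type*} [MeasurableSpace Ω] (P : Measure Ω) {n : ℕ}
    (X : Ω → EuclideanSpace ℝ (Fin n)) (f : EuclideanSpace ℝ (Fin n) → ℝ) : Prop :=
  Measurable X ∧ Measure.map X P = volume.withDensity fun x => ENNReal.ofReal (f x)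

/-- `X` is isotropic: centered with identity covariance. -/
def Isotropic {Ω : Type*} [MeasurableSpace Ω] (P : Measure Ω) {n : ℕ}
    (X : Ω → EuclideanSpace ℝ (Fin n)) : Prop :=
  (∫ ω, X ω ∂P) = 0 ∧
  ∀ θ η : EuclideanSpace ℝ (Fin n), (∫ ω, ⟪X ω, θ⟫ * ⟪X ω, η⟫ ∂P) = ⟪θ, η⟫

/-- `X` is ψ_α with constant `b`. -/
def IsPsiAlpha {Ω : Type*} [MeasurableSpace Ω] (P : Measure Ω) {n : ℕ}
    (X : Ω → EuclideanSpace ℝ (Fin n)) (α b : ℝ) : Prop :=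
  ∀ p : ℝ, 2 ≤ p → ∀ y : EuclideanSpace ℝ (Fin n),
    (∫ ω, |⟪X ω, y⟫| ^ p ∂P) ^ (1/p) ≤ b * p ^ (1/α) * (∫ ω, ⟪X ω, y⟫ ^ 2 ∂P) ^ ((1:ℝ)/2)

/-- `G` is a standard Gaussian random vector in `ℝⁿ`. -/
def IsStdGaussian {Ω : Type*} [MeasurableSpace Ω] (P : Measure Ω) {n : ℕ}
    (G : Ω → EuclideanSpace ℝ (Fin n)) : Prop :=
  Measurable G ∧
  Measure.map G P = volume.withDensity fun x =>
    ENNReal.ofReal ((2 * π) ^ (-(n:ℝ)/2) * Real.exp (-‖x‖ ^ 2 / 2))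

/-- Surface area of the unit sphere `S^{k-1}` in `ℝᵏ`. -/
def sphereVol (k : ℕ) : ℝ := 2 * π ^ ((k : ℝ)/2) / Real.Gamma ((k : ℝ)/2)

/-- The marginal density `π_F g(x) = ∫_{F^⊥} g(x+y) dy`. -/
def marginalDensity {n : ℕ} (g : EuclideanSpace ℝ (Fin n) → ℝ)
    (F : Submodule ℝ (EuclideanSpace ℝ (Fin n))) (x : EuclideanSpace ℝ (Fin n)) : ℝ :=
  ∫ y : Fᗮ, g (x + y)

/-- `h_{k,p}(u) = vol(S^{k-1}) ∫₀^∞ t^{p+k-1} π_{u(E₀)} g(t u(θ₀)) dt`. -/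
def hkp {n : ℕ} (g : EuclideanSpace ℝ (Fin n) → ℝ)
    (E₀ : Submodule ℝ (EuclideanSpace ℝ (Fin n))) (θ₀ : EuclideanSpace ℝ (Fin n))
    (k : ℕ) (p : ℝ) (u : Matrix (Fin n) (Fin n) ℝ) : ℝ :=
  sphereVol k * ∫ t in Set.Ioi (0:ℝ), t ^ (p + (k:ℝ) - 1) *
    marginalDensity g (Submodule.map (Matrix.toEuclideanLin u) E₀) (t • mApp u θ₀)

/-- Support functional of the one-sided L_q-centroid body `Z⁺_q(w)`. -/
def suppZplus {m : ℕ} (w : EuclideanSpace ℝ (Fin m) → ℝ) (q : ℝ)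
    (y : EuclideanSpace ℝ (Fin m)) : ℝ :=
  (2 * ∫ x, (max ⟪x, y⟫ 0) ^ q * w x) ^ (1/q)

/-- Ball's body `K_q(w) = {x : q ∫₀^∞ t^{q-1} w(tx) dt ≥ 1}`. -/
def ballBody {m : ℕ} (w : EuclideanSpace ℝ (Fin m) → ℝ) (q : ℝ) :
    Set (EuclideanSpace ℝ (Fin m)) :=
  {x | 1 ≤ q * ∫ t in Set.Ioi (0:ℝ), t ^ (q-1) * w (t • x)}

/-- The one-sided L_q-centroid body `Z⁺_q(w)`, as the convex set with support
functional `suppZplus w q`. -/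
def ZplusBody {m : ℕ} (w : EuclideanSpace ℝ (Fin m) → ℝ) (q : ℝ) :
    Set (EuclideanSpace ℝ (Fin m)) :=
  {x | ∀ y, ⟪x, y⟫ ≤ suppZplus w q y}


lemma polar_lintegral {m : ℕ} (hm : 1 ≤ m) (f : EuclideanSpace ℝ (Fin m) → ℝ≥0∞)
    (hf : Measurable f) :
    ∫⁻ x, f x = ∫⁻ φ : Metric.sphere (0 : EuclideanSpace ℝ (Fin m)) 1,
      (∫⁻ r in Set.Ioi (0:ℝ), ENNReal.ofReal (r ^ (m-1)) * f (r • (φ : EuclideanSpace ℝ (Fin m))))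
        ∂((volume : Measure (EuclideanSpace ℝ (Fin m))).toSphere) := by
  have : Nonempty (Fin m) := ⟨⟨0, hm⟩⟩
  have hd : Module.finrank ℝ (EuclideanSpace ℝ (Fin m)) = m := by simp
  set μ := (volume : Measure (EuclideanSpace ℝ (Fin m))) with hμ
  have hsm : Measurable fun p : Metric.sphere (0 : EuclideanSpace ℝ (Fin m)) 1 × Set.Ioi (0:ℝ) =>
      f ((p.2 : ℝ) • (p.1 : EuclideanSpace ℝ (Fin m))) := by
    apply hf.comp
    fun_prop
  calc ∫⁻ x, f x ∂μ = ∫⁻ x : ({(0)}ᶜ : Set (EuclideanSpace ℝ (Fin m))), f x.1 ∂(μ.comap (↑)) := by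
        rw [lintegral_subtype_comap (measurableSet_singleton _).compl f,
          restrict_compl_singleton]
    _ = ∫⁻ p, f ((p.2 : ℝ) • (p.1 : EuclideanSpace ℝ (Fin m)))
          ∂(μ.toSphere.prod (.volumeIoiPow (Module.finrank ℝ (EuclideanSpace ℝ (Fin m)) - 1))) := by
        rw [← μ.measurePreserving_homeomorphUnitSphereProd.lintegral_comp hsm]
        refine lintegral_congr fun x => ?_
        congr 1
        have : ‖x.1‖ ≠ 0 := norm_ne_zero_iff.2 x.2
        simp [smul_smul, this]
    _ = _ := by
        rw [lintegral_prod _ hsm.aemeasurable, hd]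
        refine lintegral_congr fun φ => ?_
        rw [Measure.volumeIoiPow, lintegral_withDensity_eq_lintegral_mul]
        · simp only [Pi.mul_apply]
          rw [lintegral_subtype_comap measurableSet_Ioi
            (fun r : ℝ => ENNReal.ofReal (r ^ (m-1)) * f (r • (φ : EuclideanSpace ℝ (Fin m))))]
        · fun_prop
        · exact hsm.comp (by fun_prop)

lemma integral_combo {μ : Measure ℝ} {A B C D : ℝ → ℝ} (hA : Integrable A μ) (hB : Integrable B μ)
    (hC : Integrable C μ) (hD : Integrable D μ) (c : ℝ) :
    ∫ t, ((A t - B t) - c * (C t - D t)) ∂μ =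
      (∫ t, A t ∂μ - ∫ t, B t ∂μ) - c * (∫ t, C t ∂μ - ∫ t, D t ∂μ) := by
  have h1 : Integrable (fun t => A t - B t) μ := hA.sub hB
  have h2 : Integrable (fun t => c * (C t - D t)) μ := (hC.sub hD).const_mul c
  rw [integral_sub h1 h2, integral_const_mul, integral_sub hA hB, integral_sub hC hD]

lemma ray_lower {f : ℝ → ℝ} {M a p : ℝ} (hM : 0 < M) (ha : 0 < a) (hap : a ≤ p)
    (h0 : ∀ t, 0 ≤ f t) (hfM : ∀ t, f t ≤ M)
    (hia : IntegrableOn (fun t => t ^ (a-1) * f t) (Set.Ioi 0))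
    (hip : IntegrableOn (fun t => t ^ (p-1) * f t) (Set.Ioi 0)) :
    M * (a * (∫ t in Set.Ioi (0:ℝ), t ^ (a-1) * f t) / M) ^ (p/a) ≤
      p * ∫ t in Set.Ioi (0:ℝ), t ^ (p-1) * f t := by
  set Ia := ∫ t in Set.Ioi (0:ℝ), t ^ (a-1) * f t with hIa
  set Ip := ∫ t in Set.Ioi (0:ℝ), t ^ (p-1) * f t with hIp
  have hp : 0 < p := ha.trans_le hap
  have hIa0 : 0 ≤ Ia := setIntegral_nonneg measurableSet_Ioi fun t ht =>
    mul_nonneg (rpow_nonneg (le_of_lt ht) _) (h0 t)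
  set R : ℝ := (a * Ia / M) ^ (1/a) with hR
  have hb : 0 ≤ a * Ia / M := by positivity
  have hR0 : 0 ≤ R := rpow_nonneg hb _
  have hRa : R ^ a = a * Ia / M := by
    rw [hR, ← rpow_mul hb]; simp [ha.ne']
  have hRp : (a * Ia / M) ^ (p/a) = R ^ p := by
    rw [hR, ← rpow_mul hb]; congr 1; field_simp
  rw [hRp]
  -- interval integrals
  have key : ∀ s : ℝ, 0 < s → IntegrableOn (fun t => t ^ (s-1) * (Set.Iic R).indicator (fun _ => M) t) (Set.Ioi (0:ℝ))
      ∧ ∫ t in Set.Ioi (0:ℝ), t ^ (s-1) * (Set.Iic R).indicator (fun _ => M) t = M * R ^ s / s := by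
    intro s hs
    have e : (fun t : ℝ => t ^ (s-1) * (Set.Iic R).indicator (fun _ => M) t) =
        (Set.Iic R).indicator (fun t => t ^ (s-1) * M) := by
      ext t; by_cases h : t ∈ Set.Iic R <;> simp [h]
    have hii : IntervalIntegrable (fun t : ℝ => t ^ (s-1)) volume 0 R :=
      intervalIntegral.intervalIntegrable_rpow' (by linarith)
    rw [e]
    constructor
    · rw [integrableOn_indicator_iff measurableSet_Iic, Set.inter_comm, Set.Ioi_inter_Iic]
      exact ((intervalIntegrable_iff_integrableOn_Ioc_of_le hR0).1 hii).mul_const M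
    · rw [setIntegral_indicator measurableSet_Iic, Set.Ioi_inter_Iic, integral_mul_const,
        ← intervalIntegral.integral_of_le hR0, integral_rpow (Or.inl (by linarith))]
      simp only [sub_add_cancel]
      rw [zero_rpow hs.ne']; ring
  obtain ⟨ka1, ka2⟩ := key a ha
  obtain ⟨kp1, kp2⟩ := key p hp
  have hpos : 0 ≤ ∫ t in Set.Ioi (0:ℝ), ((t ^ (p-1) * f t - t ^ (p-1) * (Set.Iic R).indicator (fun _ => M) t)
      - R ^ (p-a) * (t ^ (a-1) * f t - t ^ (a-1) * (Set.Iic R).indicator (fun _ => M) t)) := by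
    refine setIntegral_nonneg measurableSet_Ioi fun t (ht : 0 < t) => ?_
    have e1 : t ^ (p-1) = t ^ (p-a) * t ^ (a-1) := by
      rw [← rpow_add ht]; congr 1; ring
    have e2 : (t ^ (p-1) * f t - t ^ (p-1) * (Set.Iic R).indicator (fun _ => M) t)
      - R ^ (p-a) * (t ^ (a-1) * f t - t ^ (a-1) * (Set.Iic R).indicator (fun _ => M) t)
      = t ^ (a-1) * ((t ^ (p-a) - R ^ (p-a)) * (f t - (Set.Iic R).indicator (fun _ => M) t)) := by
      rw [e1]; ring
    rw [e2]
    refine mul_nonneg (rpow_nonneg ht.le _) ?_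
    by_cases h : t ≤ R
    · have := rpow_le_rpow ht.le h (sub_nonneg.2 hap)
      rw [Set.indicator_of_mem (show t ∈ Set.Iic R from h)]
      exact mul_nonneg_of_nonpos_of_nonpos (by linarith) (by linarith [hfM t])
    · have := rpow_le_rpow hR0 (not_le.1 h).le (sub_nonneg.2 hap)
      rw [Set.indicator_of_notMem (show t ∉ Set.Iic R from h)]
      exact mul_nonneg (by linarith) (by linarith [h0 t])
  rw [integral_combo hip kp1 hia ka1, ka2, kp2, ← hIa, ← hIp, hRa] at hpos
  have : Ia - M * (a * Ia / M) / a = 0 := by field_simp; ring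
  rw [this] at hpos
  have h3 : M * R ^ p / p ≤ Ip := by linarith
  rw [div_le_iff₀ hp] at h3
  linarith

lemma ray_upper_aux {f : ℝ → ℝ} {a p l : ℝ} (hl : 0 < l) (ha : 0 < a) (hap : a ≤ p)
    (hf0 : 0 < f 0) (h0 : ∀ t, 0 ≤ f t)
    (hlc : ∀ t, 0 ≤ t → ∀ s, 0 ≤ s → s ≤ 1 → f t ^ s * f 0 ^ (1-s) ≤ f (s * t))
    (hia : IntegrableOn (fun t => t ^ (a-1) * f t) (Set.Ioi 0))
    (hip : IntegrableOn (fun t => t ^ (p-1) * f t) (Set.Ioi 0))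
    (hlt : (∫ t in Set.Ioi (0:ℝ), t ^ (a-1) * f t) < f 0 * l ^ a * Real.Gamma a) :
    (∫ t in Set.Ioi (0:ℝ), t ^ (p-1) * f t) ≤ f 0 * l ^ p * Real.Gamma p := by
  have hp : 0 < p := ha.trans_le hap
  set g : ℝ → ℝ := fun t => f 0 * exp (-(t / l)) with hg
  have key : ∀ s : ℝ, 0 < s → IntegrableOn (fun t => t ^ (s-1) * g t) (Set.Ioi (0:ℝ))
      ∧ ∫ t in Set.Ioi (0:ℝ), t ^ (s-1) * g t = f 0 * l ^ s * Real.Gamma s := by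
    intro s hs
    have e : (fun t => t ^ (s-1) * g t) = fun t => f 0 * (t ^ (s-1) * exp (-(l⁻¹ * t))) := by
      ext t; simp only [hg]; rw [div_eq_inv_mul]; ring
    rw [e]
    have hint := Real.integral_rpow_mul_exp_neg_mul_Ioi hs (inv_pos.2 hl)
    constructor
    · refine Integrable.const_mul ?_ _
      by_contra hcon
      rw [integral_undef hcon] at hint
      have : 0 < (1 / l⁻¹) ^ s * Real.Gamma s := by
        have := Real.Gamma_pos_of_pos hs
        positivity
      linarith
    · rw [integral_const_mul, hint]; simp; ring
  obtain ⟨ka1, ka2⟩ := key a ha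
  obtain ⟨kp1, kp2⟩ := key p hp
  -- downward closure
  have hdown : ∀ t, 0 < t → g t ≤ f t → ∀ u, 0 ≤ u → u ≤ t → g u ≤ f u := by
    intro t ht hgt u hu hut
    have hs1 : u / t ≤ 1 := (div_le_one ht).2 hut
    have hs0 : 0 ≤ u / t := by positivity
    have h1 := hlc t ht.le (u/t) hs0 hs1
    have e : u / t * t = u := by field_simp
    rw [e] at h1
    refine le_trans ?_ h1
    have h2 : g t ^ (u/t) ≤ f t ^ (u/t) := rpow_le_rpow (by positivity) hgt hs0
    refine le_trans (le_of_eq ?_) (mul_le_mul_of_nonneg_right h2 (by positivity))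
    simp only [hg]
    rw [mul_rpow hf0.le (exp_pos _).le, ← exp_mul]
    have : f 0 = f 0 ^ (u/t) * f 0 ^ (1 - u/t) := by
      rw [← rpow_add hf0]; simp
    have e3 : -(t/l) * (u/t) = -(u/l) := by field_simp
    rw [e3]
    nth_rewrite 1 [this]
    ring
  -- crossing point
  have hbd : ∃ T, 0 ≤ T ∧ ∀ t, T < t → f t < g t := by
    by_contra hcon
    push Not at hcon
    have hall : ∀ t, 0 < t → g t ≤ f t := by
      intro t ht
      obtain ⟨u, hu, hu2⟩ := hcon t ht.le
      exact hdown u (ht.trans hu) hu2 t ht.le hu.le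
    have : ∫ t in Set.Ioi (0:ℝ), t ^ (a-1) * g t ≤ ∫ t in Set.Ioi (0:ℝ), t ^ (a-1) * f t :=
      setIntegral_mono_on ka1 hia measurableSet_Ioi fun t ht =>
        mul_le_mul_of_nonneg_left (hall t ht) (rpow_nonneg (le_of_lt ht) _)
    rw [ka2] at this
    linarith
  obtain ⟨T0, hT0, hT0'⟩ := hbd
  set S : Set ℝ := {t | 0 ≤ t ∧ g t ≤ f t} with hS
  have hSne : S.Nonempty := ⟨0, le_rfl, by simp [hg]⟩
  have hSb : BddAbove S := ⟨T0, fun t ht => not_lt.1 fun h => absurd (hT0' t h) (not_lt.2 ht.2)⟩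
  set T := sSup S with hT
  have hTnn : 0 ≤ T := le_csSup hSb ⟨le_rfl, by simp [hg]⟩
  have hT1 : ∀ t, 0 < t → t < T → g t ≤ f t := by
    intro t ht htT
    obtain ⟨u, hu, htu⟩ := exists_lt_of_lt_csSup hSne htT
    exact hdown u (ht.trans htu) hu.2 t ht.le htu.le
  have hT2 : ∀ t, T < t → f t ≤ g t := by
    intro t ht
    by_contra hcon
    have : t ∈ S := ⟨hTnn.trans ht.le, (not_le.1 hcon).le⟩
    exact absurd (le_csSup hSb this) (not_le.2 ht)
  have hneg : ∫ t in Set.Ioi (0:ℝ), ((t ^ (p-1) * f t - t ^ (p-1) * g t)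
      - T ^ (p-a) * (t ^ (a-1) * f t - t ^ (a-1) * g t)) ≤ 0 := by
    refine setIntegral_nonpos measurableSet_Ioi fun t (ht : 0 < t) => ?_
    have e1 : t ^ (p-1) = t ^ (p-a) * t ^ (a-1) := by
      rw [← rpow_add ht]; congr 1; ring
    have e2 : (t ^ (p-1) * f t - t ^ (p-1) * g t)
      - T ^ (p-a) * (t ^ (a-1) * f t - t ^ (a-1) * g t)
      = t ^ (a-1) * ((t ^ (p-a) - T ^ (p-a)) * (f t - g t)) := by
      rw [e1]; ring
    rw [e2]
    refine mul_nonpos_of_nonneg_of_nonpos (rpow_nonneg ht.le _) ?_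
    rcases lt_trichotomy t T with h | h | h
    · have := rpow_le_rpow ht.le h.le (sub_nonneg.2 hap)
      exact mul_nonpos_of_nonpos_of_nonneg (by linarith) (by linarith [hT1 t ht h])
    · rw [h]; simp
    · have := rpow_le_rpow hTnn h.le (sub_nonneg.2 hap)
      exact mul_nonpos_of_nonneg_of_nonpos (by linarith) (by linarith [hT2 t h])
  rw [integral_combo hip kp1 hia ka1, ka2, kp2] at hneg
  have := mul_nonpos_of_nonneg_of_nonpos (rpow_nonneg hTnn (p-a)) (sub_nonpos.2 hlt.le)
  linarith

lemma ray_upper {f : ℝ → ℝ} {a p : ℝ} (ha : 0 < a) (hap : a ≤ p)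
    (hf0 : 0 < f 0) (h0 : ∀ t, 0 ≤ f t)
    (hlc : ∀ t, 0 ≤ t → ∀ s, 0 ≤ s → s ≤ 1 → f t ^ s * f 0 ^ (1-s) ≤ f (s * t))
    (hia : IntegrableOn (fun t => t ^ (a-1) * f t) (Set.Ioi 0))
    (hip : IntegrableOn (fun t => t ^ (p-1) * f t) (Set.Ioi 0)) :
    (∫ t in Set.Ioi (0:ℝ), t ^ (p-1) * f t) ≤ f 0 * Real.Gamma p *
      ((∫ t in Set.Ioi (0:ℝ), t ^ (a-1) * f t) / (f 0 * Real.Gamma a)) ^ (p/a) := by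
  set Ia := ∫ t in Set.Ioi (0:ℝ), t ^ (a-1) * f t with hIa
  have hG := Real.Gamma_pos_of_pos ha
  have hp : 0 < p := ha.trans_le hap
  have hIa0 : 0 ≤ Ia := setIntegral_nonneg measurableSet_Ioi fun t ht =>
    mul_nonneg (rpow_nonneg (le_of_lt ht) _) (h0 t)
  set b := Ia / (f 0 * Real.Gamma a) with hb
  have hb0 : 0 ≤ b := by positivity
  have h1 : ∀ c, b < c → (∫ t in Set.Ioi (0:ℝ), t ^ (p-1) * f t) ≤ f 0 * Real.Gamma p * c ^ (p/a) := by
    intro c hc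
    have hc0 : 0 < c := hb0.trans_lt hc
    have hl : (c ^ (1/a)) ^ a = c := by rw [← rpow_mul hc0.le]; simp [ha.ne']
    have hl2 : (c ^ (1/a)) ^ p = c ^ (p/a) := by rw [← rpow_mul hc0.le]; congr 1; field_simp
    have := ray_upper_aux (l := c ^ (1/a)) (by positivity) ha hap hf0 h0 hlc hia hip (by
      rw [hl]
      rw [hb, div_lt_iff₀ (by positivity)] at hc
      linarith)
    rw [hl2] at this
    linarith
  have hcont : Filter.Tendsto (fun c : ℝ => f 0 * Real.Gamma p * c ^ (p/a)) (nhdsWithin b (Set.Ioi b))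
      (nhds (f 0 * Real.Gamma p * b ^ (p/a))) := by
    apply Filter.Tendsto.mono_left _ nhdsWithin_le_nhds
    apply Filter.Tendsto.const_mul
    exact (Real.continuousAt_rpow_const b (p/a) (Or.inr (by positivity)))
  exact ge_of_tendsto hcont (by filter_upwards [self_mem_nhdsWithin] with c hc using h1 c hc)

lemma gamma_bound {m : ℕ} {q : ℝ} (hm : 1 ≤ m) (hq : 1 ≤ q) :
    Real.Gamma ((m:ℝ) + q + 1) ^ ((m:ℝ) / (m + q)) ≤ exp (2 * q) * Real.Gamma ((m:ℝ) + 1) := by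
  have hm' : (1:ℝ) ≤ m := by exact_mod_cast hm
  set p : ℝ := m + q with hp
  have hp0 : 0 < p := by linarith
  have hG1 : 0 < Real.Gamma ((m:ℝ) + 1) := Real.Gamma_pos_of_pos (by linarith)
  have hGp : 0 < Real.Gamma (p + 1) := Real.Gamma_pos_of_pos (by linarith)
  -- step 1
  have h1 : Real.Gamma (p + 1) ≤ Real.Gamma ((m:ℝ) + 1) * (p + 1) ^ q := by
    have := Real.Gamma_mul_add_mul_le_rpow_Gamma_mul_rpow_Gamma (s := (m:ℝ)+1) (t := p + 2)
      (a := 1/(q+1)) (b := q/(q+1)) (by linarith) (by linarith) (by positivity) (by positivity)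
      (by field_simp; ring)
    have e : 1/(q+1) * ((m:ℝ)+1) + q/(q+1) * (p+2) = p + 1 := by
      rw [hp]; field_simp; ring
    have e2 : Real.Gamma (p+2) = (p+1) * Real.Gamma (p+1) := by
      rw [← Real.Gamma_add_one (by linarith)]; congr 1; ring
    rw [e, e2] at this
    have h2 := Real.rpow_le_rpow hGp.le this (show 0 ≤ q + 1 by linarith)
    rw [mul_rpow (by positivity) (by positivity), ← rpow_mul hG1.le, ← rpow_mul (by positivity)] at h2
    have e3 : 1/(q+1)*(q+1) = 1 := by field_simp
    have e4 : q/(q+1)*(q+1) = q := by field_simp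
    rw [e3, e4, rpow_one, mul_rpow (by positivity) hGp.le, rpow_add hGp, rpow_one] at h2
    have h3 : 0 < Real.Gamma (p+1) ^ q := by positivity
    refine le_of_mul_le_mul_left ?_ h3
    linarith
  -- step 2
  have h2 : (p+1) ^ m ≤ exp (2*p) * Real.Gamma ((m:ℝ)+1) := by
    rw [Real.Gamma_nat_eq_factorial]
    have := Real.pow_div_factorial_le_exp (p+1) (by linarith) m
    rw [div_le_iff₀ (by positivity)] at this
    refine this.trans ?_
    gcongr
    linarith
  have h3 : (p+1) ^ (m * q / p) ≤ exp (2*q) * Real.Gamma ((m:ℝ)+1) ^ (q/p) := by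
    have := Real.rpow_le_rpow (by positivity) h2 (show 0 ≤ q/p by positivity)
    rw [mul_rpow (by positivity) hG1.le, ← exp_mul, ← rpow_natCast, ← rpow_mul (by positivity)] at this
    have e : 2 * p * (q/p) = 2*q := by field_simp
    rw [e, ← mul_div_assoc] at this
    exact this
  calc Real.Gamma (p + 1) ^ ((m:ℝ) / p) ≤ (Real.Gamma ((m:ℝ) + 1) * (p + 1) ^ q) ^ ((m:ℝ)/p) :=
        rpow_le_rpow hGp.le h1 (by positivity)
    _ = Real.Gamma ((m:ℝ) + 1) ^ ((m:ℝ)/p) * (p+1) ^ (m * q / p) := by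
        rw [mul_rpow hG1.le (by positivity), ← rpow_mul (by positivity)]
        congr 2; ring
    _ ≤ Real.Gamma ((m:ℝ) + 1) ^ ((m:ℝ)/p) * (exp (2*q) * Real.Gamma ((m:ℝ)+1) ^ (q/p)) := by
        gcongr
    _ = exp (2*q) * (Real.Gamma ((m:ℝ) + 1) ^ ((m:ℝ)/p) * Real.Gamma ((m:ℝ)+1) ^ (q/p)) := by ring
    _ = exp (2*q) * Real.Gamma ((m:ℝ)+1) := by
        rw [← rpow_add hG1]
        have : (m:ℝ)/p + q/p = 1 := by rw [← add_div, ← hp]; field_simp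
        rw [this, rpow_one]

/-- lower comparison constant -/
def cA (m : ℕ) (q f0 : ℝ) : ℝ :=
  (exp (4 * m) * f0) ^ ((m:ℝ) / (m + q)) / (exp (4 * m) * f0)

/-- upper comparison constant -/
def cB (m : ℕ) (q f0 : ℝ) : ℝ :=
  (f0 * Real.Gamma ((m:ℝ) + q + 1)) ^ ((m:ℝ) / (m + q)) / (f0 * Real.Gamma ((m:ℝ) + 1))

lemma cA_pos {m : ℕ} {q f0 : ℝ} (h : 0 < f0) : 0 < cA m q f0 := by
  unfold cA; positivity

lemma cB_le {m : ℕ} {q f0 : ℝ} (hm : 1 ≤ m) (hq : 1 ≤ q) (h : 0 < f0) :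
    cB m q f0 ≤ exp (6 * q) * cA m q f0 := by
  unfold cA cB
  have hm' : (1:ℝ) ≤ m := by exact_mod_cast hm
  have hG1 : 0 < Real.Gamma ((m:ℝ) + 1) := Real.Gamma_pos_of_pos (by linarith)
  have hGp : 0 < Real.Gamma ((m:ℝ) + q + 1) := Real.Gamma_pos_of_pos (by linarith)
  have hg := gamma_bound hm hq
  set p : ℝ := m + q with hp
  have hp0 : 0 < p := by linarith
  rw [mul_rpow h.le hGp.le, mul_rpow (exp_pos _).le h.le, ← exp_mul]
  rw [div_le_iff₀ (by positivity)]
  have e : exp (6 * q) * (exp (4 * ↑m * (↑m / p)) * f0 ^ ((m:ℝ) / p) / (exp (4 * ↑m) * f0)) *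
    (f0 * Gamma (↑m + 1)) = f0 ^ ((m:ℝ)/p) * ((exp (6*q) * exp (4 * ↑m * (↑m / p)) / exp (4*m)) * Gamma (↑m + 1)) := by
    field_simp
  rw [e]
  gcongr
  refine hg.trans ?_
  gcongr
  rw [← exp_add, ← exp_sub]
  gcongr
  have : (m:ℝ) * (m/p) = m - m * (q/p) := by
    field_simp; rw [hp]; ring
  have h2 : (m:ℝ) * (q/p) ≤ q := by
    rw [← mul_div_assoc, div_le_iff₀ hp0, hp]; nlinarith
  nlinarith

lemma ray_compare {m : ℕ} {q : ℝ} (hm : 1 ≤ m) (hq : 1 ≤ q) {f : ℝ → ℝ}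
    (hf0 : 0 < f 0) (h0 : ∀ t, 0 ≤ f t) (hfM : ∀ t, f t ≤ exp (4 * m) * f 0)
    (hlc : ∀ t, 0 ≤ t → ∀ s, 0 ≤ s → s ≤ 1 → f t ^ s * f 0 ^ (1-s) ≤ f (s * t))
    (hia : IntegrableOn (fun t => t ^ ((m:ℝ)-1) * f t) (Set.Ioi 0))
    (hip : IntegrableOn (fun t => t ^ ((m:ℝ)+q-1) * f t) (Set.Ioi 0)) :
    cA m q (f 0) * (m * ∫ t in Set.Ioi (0:ℝ), t ^ ((m:ℝ)-1) * f t) ≤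
      ((m + q) * ∫ t in Set.Ioi (0:ℝ), t ^ ((m:ℝ)+q-1) * f t) ^ ((m:ℝ)/(m+q)) ∧
    ((m + q) * ∫ t in Set.Ioi (0:ℝ), t ^ ((m:ℝ)+q-1) * f t) ^ ((m:ℝ)/(m+q)) ≤
    cB m q (f 0) * (m * ∫ t in Set.Ioi (0:ℝ), t ^ ((m:ℝ)-1) * f t) := by
  have hm' : (1:ℝ) ≤ m := by exact_mod_cast hm
  have hl := ray_lower (M := exp (4*m) * f 0) (a := m) (p := m + q) (by positivity) (by linarith)
    (by linarith) h0 hfM hia hip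
  have hu := ray_upper (a := m) (p := m + q) (by linarith) (by linarith) hf0 h0 hlc hia hip
  set Ia := ∫ t in Set.Ioi (0:ℝ), t ^ ((m:ℝ)-1) * f t with hIa
  set Ip := ∫ t in Set.Ioi (0:ℝ), t ^ ((m:ℝ)+q-1) * f t with hIp
  have hIa0 : 0 ≤ Ia := setIntegral_nonneg measurableSet_Ioi fun t ht =>
    mul_nonneg (rpow_nonneg (le_of_lt ht) _) (h0 t)
  have hIp0 : 0 ≤ Ip := setIntegral_nonneg measurableSet_Ioi fun t ht =>
    mul_nonneg (rpow_nonneg (le_of_lt ht) _) (h0 t)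
  have hGm : 0 < Real.Gamma (m:ℝ) := Real.Gamma_pos_of_pos (by linarith)
  have hGp : 0 < Real.Gamma ((m:ℝ) + q) := Real.Gamma_pos_of_pos (by linarith)
  have eGm : Real.Gamma ((m:ℝ)+1) = m * Real.Gamma (m:ℝ) := Real.Gamma_add_one (by linarith)
  have eGp : Real.Gamma ((m:ℝ)+q+1) = (m+q) * Real.Gamma ((m:ℝ)+q) := Real.Gamma_add_one (by linarith)
  unfold cA cB
  set p : ℝ := m + q with hp
  have hp0 : 0 < p := by linarith
  have hcancel : ∀ x : ℝ, 0 ≤ x → (x ^ (p/m)) ^ ((m:ℝ)/p) = x := by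
    intro x hx
    rw [← rpow_mul hx]
    have : p/m * (m/p) = 1 := by field_simp
    rw [this, rpow_one]
  constructor
  · have := rpow_le_rpow (by positivity) hl (show 0 ≤ (m:ℝ)/p by positivity)
    rw [mul_rpow (by positivity) (by positivity), hcancel _ (by positivity)] at this
    refine le_trans (le_of_eq ?_) this
    ring
  · have h1 : p * Ip ≤ f 0 * Real.Gamma (p+1) * (m * Ia / (f 0 * Real.Gamma ((m:ℝ)+1))) ^ (p/m) := by
      rw [eGp, eGm]
      have e : m * Ia / (f 0 * (m * Real.Gamma (m:ℝ))) = Ia / (f 0 * Real.Gamma (m:ℝ)) := by field_simp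
      rw [e]
      nlinarith
    have := rpow_le_rpow (by positivity) h1 (show 0 ≤ (m:ℝ)/p by positivity)
    have hGm1 : 0 < Real.Gamma ((m:ℝ)+1) := by rw [eGm]; positivity
    have hGp1 : 0 < Real.Gamma (p+1) := by rw [eGp]; positivity
    rw [mul_rpow (x := f 0 * Real.Gamma (p+1)) (by positivity) (by positivity),
      hcancel _ (by positivity)] at this
    refine this.trans (le_of_eq ?_)
    ring

lemma bm_compact {K L C : Set ℝ} (hK : IsCompact K) (hL : IsCompact L) (hKn : K.Nonempty)
    (hLn : L.Nonempty) (h : ∀ x ∈ K, ∀ y ∈ L, x + y ∈ C) :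
    volume K + volume L ≤ volume C := by
  obtain ⟨a, ha, ha'⟩ := hK.exists_isGreatest hKn
  obtain ⟨b, hb, hb'⟩ := hL.exists_isLeast hLn
  have e1 : volume ((fun x => x + b) '' K) = volume K := by
    rw [Set.image_add_right, measure_preimage_add_right]
  have e2 : volume ((fun x => a + x) '' L) = volume L := by
    rw [Set.image_add_left, measure_preimage_add]
  rw [← e1, ← e2]
  have hm2 : MeasurableSet ((fun x => a + x) '' L) := (hL.image (by fun_prop)).measurableSet
  rw [← measure_union₀ hm2.nullMeasurableSet]
  · apply measure_mono
    rintro z (⟨x, hx, rfl⟩ | ⟨y, hy, rfl⟩)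
    · exact h x hx b hb
    · exact h a ha y hy
  · refine measure_mono_null (t := {a + b}) ?_ (by simp)
    rintro z ⟨⟨x, hx, rfl⟩, ⟨y, hy, hxy⟩⟩
    have h1 := ha' hx
    have h2 := hb' hy
    simp only [Set.mem_singleton_iff] at *
    linarith

lemma bm_meas {A B C : Set ℝ} (hA : MeasurableSet A) (hB : MeasurableSet B) (hAn : A.Nonempty)
    (hBn : B.Nonempty) (h : ∀ x ∈ A, ∀ y ∈ B, x + y ∈ C) :
    volume A + volume B ≤ volume C := by
  obtain ⟨a, ha⟩ := hAn
  obtain ⟨b, hb⟩ := hBn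
  have h1 : ∀ K, K ⊆ A → IsCompact K → ∀ L, L ⊆ B → IsCompact L → volume K + volume L ≤ volume C := by
    intro K hKA hK L hLB hL
    have := bm_compact (hK.insert a) (hL.insert b) (Set.insert_nonempty _ _) (Set.insert_nonempty _ _)
      (C := C) (fun x hx y hy => h x (Set.insert_subset ha hKA hx) y (Set.insert_subset hb hLB hy))
    exact le_trans (add_le_add (measure_mono (Set.subset_insert _ _))
      (measure_mono (Set.subset_insert _ _))) this
  have h2 : ∀ L, L ⊆ B → IsCompact L → volume A + volume L ≤ volume C := by
    intro L hLB hL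
    have hfin : volume L ≠ ⊤ := hL.measure_lt_top.ne
    refine add_le_of_le_tsub_right_of_le ?_ ?_
    · have := h1 ∅ (Set.empty_subset _) isCompact_empty L hLB hL
      simpa using this
    · rw [hA.measure_eq_iSup_isCompact]
      refine iSup₂_le fun K hKA => iSup_le fun hK => ?_
      exact ENNReal.le_sub_of_add_le_right hfin (h1 K hKA hK L hLB hL)
  have h3 : volume A ≤ volume C := by
    simpa using h2 ∅ (Set.empty_subset _) isCompact_empty
  by_cases hAf : volume A = ⊤
  · rw [hAf, top_le_iff] at h3
    rw [h3]; exact le_top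
  · refine add_le_of_le_tsub_left_of_le h3 ?_
    rw [hB.measure_eq_iSup_isCompact]
    refine iSup₂_le fun K hKA => iSup_le fun hK => ?_
    exact ENNReal.le_sub_of_add_le_left hAf (h2 K hKA hK)

lemma bm_scaled {A B C : Set ℝ} {l : ℝ} (hl0 : 0 < l) (hl1 : l < 1)
    (hA : MeasurableSet A) (hB : MeasurableSet B) (hAn : A.Nonempty)
    (hBn : B.Nonempty) (h : ∀ x ∈ A, ∀ y ∈ B, l * x + (1-l) * y ∈ C) :
    ENNReal.ofReal l * volume A + ENNReal.ofReal (1-l) * volume B ≤ volume C := by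
  have hl1' : 0 < 1 - l := by linarith
  have := bm_meas (C := C) (hA.const_smul₀ l) (hB.const_smul₀ (1-l)) (hAn.smul_set) (hBn.smul_set) (by
    rintro _ ⟨x, hx, rfl⟩ _ ⟨y, hy, rfl⟩
    exact h x hx y hy)
  rw [Measure.addHaar_smul, Measure.addHaar_smul] at this
  simpa [abs_of_pos hl0, abs_of_pos hl1'] using this

lemma pl1_norm {f g h : ℝ → ℝ} {l : ℝ} (hl0 : 0 < l) (hl1 : l < 1)
    (hf : Measurable f) (hg : Measurable g) (hh : Measurable h)
    (f0 : ∀ x, 0 ≤ f x) (g0 : ∀ x, 0 ≤ g x) (h0 : ∀ x, 0 ≤ h x)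
    (f1 : ∀ x, f x ≤ 1) (g1 : ∀ x, g x ≤ 1)
    (fs : ∀ t < 1, ∃ x, t < f x) (gs : ∀ t < 1, ∃ x, t < g x)
    (H : ∀ x y t, 0 < t → t < f x → t < g y → t < h (l * x + (1-l) * y)) :
    ENNReal.ofReal l * (∫⁻ x, ENNReal.ofReal (f x)) + ENNReal.ofReal (1-l) * (∫⁻ x, ENNReal.ofReal (g x))
      ≤ ∫⁻ x, ENNReal.ofReal (h x) := by
  rw [lintegral_eq_lintegral_meas_lt _ (.of_forall f0) hf.aemeasurable,
    lintegral_eq_lintegral_meas_lt _ (.of_forall g0) hg.aemeasurable,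
    lintegral_eq_lintegral_meas_lt _ (.of_forall h0) hh.aemeasurable]
  have mf : Measurable fun t : ℝ => volume {a | t < f a} :=
    Antitone.measurable fun s t hst => measure_mono fun x (hx : t < f x) => lt_of_le_of_lt hst hx
  have mg : Measurable fun t : ℝ => volume {a | t < g a} :=
    Antitone.measurable fun s t hst => measure_mono fun x (hx : t < g x) => lt_of_le_of_lt hst hx
  rw [← lintegral_const_mul _ mf, ← lintegral_const_mul _ mg,
    ← lintegral_add_left (mf.const_mul _)]
  refine setLIntegral_mono' measurableSet_Ioi fun t (ht : 0 < t) => ?_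
  rcases lt_or_ge t 1 with h1 | h1
  · exact bm_scaled hl0 hl1 (measurableSet_lt measurable_const hf) (measurableSet_lt measurable_const hg)
      (fs t h1) (gs t h1) fun x hx y hy => H x y t ht hx hy
  · have e1 : {a | t < f a} = ∅ := by
      ext x; simp [(f1 x).trans h1]
    have e2 : {a | t < g a} = ∅ := by
      ext x; simp [(g1 x).trans h1]
    simp [e1, e2]

lemma ennreal_amgm (A B : ℝ≥0∞) {l : ℝ} (hl0 : 0 < l) (hl1 : l < 1) :
    A ^ l * B ^ (1-l) ≤ ENNReal.ofReal l * A + ENNReal.ofReal (1-l) * B := by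
  have hl1' : 0 < 1 - l := by linarith
  by_cases hA : A = ⊤
  · subst hA
    rw [ENNReal.mul_top (by simpa using hl0)]; simp
  by_cases hB : B = ⊤
  · subst hB
    rw [ENNReal.mul_top (by simpa using hl1)]; simp
  lift A to ℝ≥0 using hA
  lift B to ℝ≥0 using hB
  have := NNReal.geom_mean_le_arith_mean2_weighted (Real.toNNReal l) (Real.toNNReal (1-l)) A B (by
    rw [← Real.toNNReal_add hl0.le hl1'.le]; simp)
  rw [Real.coe_toNNReal _ hl0.le, Real.coe_toNNReal _ hl1'.le] at this
  rw [← ENNReal.coe_rpow_of_nonneg _ hl0.le, ← ENNReal.coe_rpow_of_nonneg _ hl1'.le]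
  unfold ENNReal.ofReal
  exact_mod_cast this

lemma pl1_bdd {F G H : ℝ → ℝ≥0∞} {l : ℝ} (hl0 : 0 < l) (hl1 : l < 1)
    (hF : Measurable F) (hG : Measurable G) (hH : Measurable H) (n : ℝ≥0∞) (hn : n ≠ ⊤)
    (Fn : ∀ x, F x ≤ n) (Gn : ∀ x, G x ≤ n)
    (h : ∀ x y, F x ^ l * G y ^ (1-l) ≤ H (l * x + (1-l) * y)) :
    (∫⁻ x, F x) ^ l * (∫⁻ x, G x) ^ (1-l) ≤ ∫⁻ x, H x := by
  have hl1' : 0 < 1 - l := by linarith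
  set a := ⨆ x, F x with ha
  set b := ⨆ x, G x with hb
  by_cases ha0 : a = 0
  · have : ∀ x, F x = 0 := fun x => le_antisymm (ha0 ▸ le_iSup F x) bot_le
    simp [this, hl0]
  by_cases hb0 : b = 0
  · have : ∀ x, G x = 0 := fun x => le_antisymm (hb0 ▸ le_iSup G x) bot_le
    simp [this, hl1]
  have hat : a ≠ ⊤ := ne_top_of_le_ne_top hn (iSup_le Fn)
  have hbt : b ≠ ⊤ := ne_top_of_le_ne_top hn (iSup_le Gn)
  set c := a ^ l * b ^ (1-l) with hc
  have hal0 : a ^ l ≠ 0 := by simp [ha0, hat, hl0.le]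
  have halt : a ^ l ≠ ⊤ := ENNReal.rpow_ne_top_of_nonneg hl0.le hat
  have hbl0 : b ^ (1-l) ≠ 0 := by simp [hb0, hbt, hl1.le]
  have hblt : b ^ (1-l) ≠ ⊤ := ENNReal.rpow_ne_top_of_nonneg hl1'.le hbt
  have hc0 : c ≠ 0 := mul_ne_zero hal0 hbl0
  have hct : c ≠ ⊤ := ENNReal.mul_ne_top halt hblt
  have Fa : ∀ x, F x / a ≤ 1 := fun x => ENNReal.div_le_of_le_mul (by simpa using le_iSup F x)
  have Gb : ∀ x, G x / b ≤ 1 := fun x => ENNReal.div_le_of_le_mul (by simpa using le_iSup G x)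
  have Fat : ∀ x, F x / a ≠ ⊤ := fun x => ne_top_of_le_ne_top ENNReal.one_ne_top (Fa x)
  have Gbt : ∀ x, G x / b ≠ ⊤ := fun x => ne_top_of_le_ne_top ENNReal.one_ne_top (Gb x)
  have hmint : ∀ x, min (H x / c) 1 ≠ ⊤ := fun x => ne_top_of_le_ne_top ENNReal.one_ne_top (min_le_right _ _)
  have hprod : ∀ x y, (F x / a) ^ l * (G y / b) ^ (1-l) ≤ min (H (l * x + (1-l) * y) / c) 1 := by
    intro x y
    refine le_min ?_ ?_
    · rw [ENNReal.div_rpow_of_nonneg _ _ hl0.le, ENNReal.div_rpow_of_nonneg _ _ hl1'.le]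
      have : F x ^ l / a ^ l * (G y ^ (1-l) / b ^ (1-l)) = F x ^ l * G y ^ (1-l) / c := by
        rw [hc, div_eq_mul_inv, div_eq_mul_inv, div_eq_mul_inv, ENNReal.mul_inv (Or.inl hal0) (Or.inl halt)]
        ring
      rw [this]
      gcongr
      exact h x y
    · exact mul_le_one' (ENNReal.rpow_le_one (Fa x) hl0.le) (ENNReal.rpow_le_one (Gb y) hl1'.le)
  have hsup : ∀ (P : ℝ → ℝ≥0∞) (s : ℝ≥0∞), s = ⨆ x, P x → s ≠ 0 → s ≠ ⊤ → (∀ x, P x / s ≠ ⊤) →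
      ∀ t < (1:ℝ), ∃ x, t < (P x / s).toReal := by
    intro P s hs hs0 hst hPt t ht
    rcases lt_or_ge t 0 with h0 | h0
    · exact ⟨0, h0.trans_le ENNReal.toReal_nonneg⟩
    have : ENNReal.ofReal t * s < ⨆ x, P x := by
      rw [← hs]
      calc ENNReal.ofReal t * s < 1 * s := by
            rw [ENNReal.mul_lt_mul_iff_left hs0 hst]; simpa using ht
        _ = s := one_mul s
    obtain ⟨x, hx⟩ := lt_iSup_iff.1 this
    refine ⟨x, ?_⟩
    rw [← ENNReal.ofReal_lt_iff_lt_toReal h0 (hPt x)]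
    exact (ENNReal.lt_div_iff_mul_lt (Or.inl hs0) (Or.inl hst)).2 hx
  have key := pl1_norm (f := fun x => (F x / a).toReal) (g := fun x => (G x / b).toReal)
    (h := fun x => (min (H x / c) 1).toReal) hl0 hl1
    (hF.div_const a).ennreal_toReal (hG.div_const b).ennreal_toReal
    ((hH.div_const c).min measurable_const).ennreal_toReal
    (fun _ => ENNReal.toReal_nonneg) (fun _ => ENNReal.toReal_nonneg) (fun _ => ENNReal.toReal_nonneg)
    (fun x => ENNReal.toReal_le_of_le_ofReal zero_le_one (by simpa using Fa x))
    (fun x => ENNReal.toReal_le_of_le_ofReal zero_le_one (by simpa using Gb x))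
    (hsup F a ha ha0 hat Fat) (hsup G b hb hb0 hbt Gbt) (by
      intro x y t ht htf htg
      have h1 := ENNReal.toReal_mono (hmint _) (hprod x y)
      rw [ENNReal.toReal_mul, ← ENNReal.toReal_rpow, ← ENNReal.toReal_rpow] at h1
      refine lt_of_lt_of_le ?_ h1
      have e : t = t ^ l * t ^ (1-l) := by rw [← rpow_add ht]; simp
      rw [e]
      exact mul_lt_mul'' (rpow_lt_rpow ht.le htf hl0) (rpow_lt_rpow ht.le htg hl1')
        (by positivity) (by positivity))
  simp only [ENNReal.ofReal_toReal (Fat _), ENNReal.ofReal_toReal (Gbt _),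
    ENNReal.ofReal_toReal (hmint _)] at key
  have k1 : ∫⁻ x, F x / a = (∫⁻ x, F x) / a := by
    simp only [div_eq_mul_inv]; rw [lintegral_mul_const _ hF]
  have k2 : ∫⁻ x, G x / b = (∫⁻ x, G x) / b := by
    simp only [div_eq_mul_inv]; rw [lintegral_mul_const _ hG]
  have k3 : ∫⁻ x, min (H x / c) 1 ≤ (∫⁻ x, H x) / c := by
    refine (lintegral_mono fun x => min_le_left _ _).trans (le_of_eq ?_)
    simp only [div_eq_mul_inv]; rw [lintegral_mul_const _ hH]
  rw [k1, k2] at key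
  have k4 := (ennreal_amgm _ _ hl0 hl1).trans (key.trans k3)
  rw [ENNReal.div_rpow_of_nonneg _ _ hl0.le, ENNReal.div_rpow_of_nonneg _ _ hl1'.le] at k4
  have : (∫⁻ x, F x) ^ l / a ^ l * ((∫⁻ x, G x) ^ (1-l) / b ^ (1-l)) = (∫⁻ x, F x) ^ l * (∫⁻ x, G x) ^ (1-l) / c := by
    rw [hc, div_eq_mul_inv, div_eq_mul_inv, div_eq_mul_inv, ENNReal.mul_inv (Or.inl hal0) (Or.inl halt)]
    ring
  rw [this, ENNReal.div_le_iff hc0 hct, ENNReal.div_mul_cancel hc0 hct] at k4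
  exact k4

lemma pl1 {F G H : ℝ → ℝ≥0∞} {l : ℝ} (hl0 : 0 < l) (hl1 : l < 1)
    (hF : Measurable F) (hG : Measurable G) (hH : Measurable H)
    (h : ∀ x y, F x ^ l * G y ^ (1-l) ≤ H (l * x + (1-l) * y)) :
    (∫⁻ x, F x) ^ l * (∫⁻ x, G x) ^ (1-l) ≤ ∫⁻ x, H x := by
  have hl1' : 0 < 1 - l := by linarith
  by_cases hF0 : ∫⁻ x, F x = 0
  · simp [hF0, hl0]
  by_cases hG0 : ∫⁻ x, G x = 0
  · simp [hG0, hl1]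
  have trunc : ∀ P : ℝ → ℝ≥0∞, Measurable P →
      Filter.Tendsto (fun n : ℕ => ∫⁻ x, min (P x) n) Filter.atTop (nhds (∫⁻ x, P x)) := by
    intro P hP
    refine lintegral_tendsto_of_tendsto_of_monotone (fun n => (hP.min measurable_const).aemeasurable) ?_ ?_
    · exact .of_forall fun x i j hij => min_le_min le_rfl (by exact_mod_cast hij)
    · refine .of_forall fun x => ?_
      have : Filter.Tendsto (fun n : ℕ => min (P x) (n : ℝ≥0∞)) Filter.atTop (nhds (min (P x) ⊤)) :=
        tendsto_const_nhds.min ENNReal.tendsto_nat_nhds_top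
      simpa using this
  have hlim : Filter.Tendsto (fun n : ℕ => (∫⁻ x, min (F x) n) ^ l * (∫⁻ x, min (G x) n) ^ (1-l))
      Filter.atTop (nhds ((∫⁻ x, F x) ^ l * (∫⁻ x, G x) ^ (1-l))) := by
    refine ENNReal.Tendsto.mul ?_ (Or.inl ?_) ?_ (Or.inl ?_)
    · exact (ENNReal.continuous_rpow_const.tendsto _).comp (trunc F hF)
    · simp [ENNReal.rpow_eq_zero_iff, hF0, hl0.le, not_lt.2 hl0.le]
    · exact (ENNReal.continuous_rpow_const.tendsto _).comp (trunc G hG)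
    · simp [ENNReal.rpow_eq_zero_iff, hG0, hl1.le, not_lt.2 hl1.le]
  refine le_of_tendsto' hlim fun n => ?_
  refine pl1_bdd hl0 hl1 (hF.min measurable_const) (hG.min measurable_const) hH n (by simp)
    (fun x => min_le_right _ _) (fun x => min_le_right _ _) fun x y => ?_
  refine le_trans ?_ (h x y)
  gcongr
  · exact min_le_left _ _
  · exact min_le_left _ _

lemma pl_pi (n : ℕ) {l : ℝ} (hl0 : 0 < l) (hl1 : l < 1) : ∀ {F G H : (Fin n → ℝ) → ℝ≥0∞}
    (_ : Measurable F) (_ : Measurable G) (_ : Measurable H)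
    (_ : ∀ x y, F x ^ l * G y ^ (1-l) ≤ H (l • x + (1-l) • y)),
    (∫⁻ x, F x) ^ l * (∫⁻ x, G x) ^ (1-l) ≤ ∫⁻ x, H x := by
  induction n with
  | zero =>
    intro F G H hF hG hH h
    rw [Measure.volume_pi_eq_dirac 0, lintegral_dirac, lintegral_dirac, lintegral_dirac]
    simpa using h 0 0
  | succ n ih =>
    intro F G H hF hG hH h
    set e := MeasurableEquiv.piFinSuccAbove (fun _ : Fin (n+1) => ℝ) 0 with he
    have hmp := (volume_preserving_piFinSuccAbove (fun _ : Fin (n+1) => ℝ) 0).symm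
    have hfub : ∀ P : (Fin (n+1) → ℝ) → ℝ≥0∞, Measurable P →
        ∫⁻ x, P x = ∫⁻ t : ℝ, ∫⁻ y : Fin n → ℝ, P (e.symm (t, y)) := by
      intro P hP
      rw [← hmp.lintegral_comp hP]
      exact lintegral_prod _ (hP.comp e.symm.measurable).aemeasurable
    have hmeas : ∀ P : (Fin (n+1) → ℝ) → ℝ≥0∞, Measurable P →
        Measurable fun t : ℝ => ∫⁻ y : Fin n → ℝ, P (e.symm (t, y)) := by
      intro P hP
      exact Measurable.lintegral_prod_right' (f := fun z : ℝ × (Fin n → ℝ) => P (e.symm z))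
        (hP.comp e.symm.measurable)
    have hlin : ∀ (s t : ℝ) (x y : Fin n → ℝ), l • e.symm (s, x) + (1-l) • e.symm (t, y) =
        e.symm (l * s + (1-l) * t, l • x + (1-l) • y) := by
      intro s t x y
      ext i
      refine Fin.cases ?_ (fun j => ?_) i
      · simp [he, MeasurableEquiv.piFinSuccAbove]
      · simp [he, MeasurableEquiv.piFinSuccAbove]
    rw [hfub F hF, hfub G hG, hfub H hH]
    refine pl1 hl0 hl1 (hmeas F hF) (hmeas G hG) (hmeas H hH) fun s t => ?_
    have msl : ∀ (P : (Fin (n+1) → ℝ) → ℝ≥0∞), Measurable P → ∀ t, Measurable fun y => P (e.symm (t, y)) :=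
      fun P hP t => hP.comp (e.symm.measurable.comp (by fun_prop))
    refine ih (msl F hF s) (msl G hG t) (msl H hH _) fun x y => ?_
    rw [← hlin]
    exact h _ _

lemma pl_eucl {m : ℕ} {l : ℝ} (hl0 : 0 < l) (hl1 : l < 1) {F G H : EuclideanSpace ℝ (Fin m) → ℝ≥0∞}
    (hF : Measurable F) (hG : Measurable G) (hH : Measurable H)
    (h : ∀ x y, F x ^ l * G y ^ (1-l) ≤ H (l • x + (1-l) • y)) :
    (∫⁻ x, F x) ^ l * (∫⁻ x, G x) ^ (1-l) ≤ ∫⁻ x, H x := by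
  have hmp := PiLp.volume_preserving_toLp (Fin m)
  rw [← hmp.lintegral_comp hF, ← hmp.lintegral_comp hG, ← hmp.lintegral_comp hH]
  refine pl_pi m hl0 hl1 (hF.comp hmp.measurable) (hG.comp hmp.measurable) (hH.comp hmp.measurable) ?_
  intro x y
  have := h (WithLp.toLp 2 x) (WithLp.toLp 2 y)
  simpa using this

lemma grunbaum_abs {α : Type*} [MeasurableSpace α] (μ : Measure α) [IsFiniteMeasure μ] {T : α → ℝ}
    (hTm : Measurable T) (hT : Integrable T μ) (h0 : ∫ x, T x ∂μ = 0)
    (hPL : ∀ s t : ℝ, 0 < s → 0 < t →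
      μ.real {x | t ≤ T x} ^ (s/(s+t)) * μ.real {x | -s ≤ T x} ^ (t/(s+t)) ≤ μ.real {x | 0 ≤ T x}) :
    μ.real Set.univ ≤ 2 * exp 1 * μ.real {x | 0 ≤ T x} := by
  set M := μ.real Set.univ with hM
  set g0 := μ.real {x | 0 ≤ T x} with hg0
  have hMg : ∀ A, μ.real A ≤ M := fun A => measureReal_mono (Set.subset_univ _)
  have he : (2:ℝ) ≤ exp 1 := by have := add_one_le_exp (1:ℝ); linarith
  have hg0n : 0 ≤ g0 := measureReal_nonneg
  have hp : Integrable (fun x => max (T x) 0) μ := hT.pos_part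
  have hn : Integrable (fun x => max (-T x) 0) μ := hT.neg_part
  have hpn : ∫ x, max (T x) 0 ∂μ = ∫ x, max (-T x) 0 ∂μ := by
    have : ∫ x, (max (T x) 0 - max (-T x) 0) ∂μ = 0 := by
      refine Eq.trans ?_ h0; congr 1; ext x
      rcases le_total (T x) 0 with h | h
      · rw [max_eq_right h, max_eq_left (by linarith)]; ring
      · rw [max_eq_left h, max_eq_right (by linarith)]; ring
    rw [integral_sub hp hn] at this; linarith
  set I := ∫ x, max (T x) 0 ∂μ with hI
  have hI0 : 0 ≤ I := integral_nonneg fun x => le_max_right _ _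
  by_cases hIz : I = 0
  · have h1 : (fun x => max (-T x) 0) =ᵐ[μ] 0 := by
      refine (integral_eq_zero_iff_of_nonneg (fun x => ?_) hn).1 (by rw [← hpn, hIz])
      exact le_max_right _ _
    have h2 : M = g0 := by
      apply measureReal_congr
      filter_upwards [h1] with x hx
      have : 0 ≤ T x := by
        have h3 := le_max_left (-T x) 0
        have h4 : max (-T x) 0 = 0 := hx
        linarith
      apply propext
      exact ⟨fun _ => this, fun _ => trivial⟩
    rw [h2]; nlinarith
  have hIp : 0 < I := lt_of_le_of_ne hI0 (Ne.symm hIz)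
  by_cases hg00 : g0 = 0
  · exfalso
    apply hIz
    refine (integral_eq_zero_iff_of_nonneg (fun x => ?_) hp).2 ?_
    · exact le_max_right _ _
    rw [hg0, measureReal_eq_zero_iff] at hg00
    have : ∀ᵐ x ∂μ, ¬ (0 ≤ T x) := by rw [ae_iff]; simpa using hg00
    filter_upwards [this] with x hx
    exact max_eq_right (not_le.1 hx).le
  have hgp : 0 < g0 := lt_of_le_of_ne hg0n (Ne.symm hg00)
  have hMp : 0 < M := lt_of_lt_of_le hgp (hMg _)
  by_contra hcon
  push Not at hcon
  set s := 2 * I / M with hs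
  have hsp : 0 < s := by positivity
  have hsM : s * M = 2 * I := by rw [hs]; field_simp
  have hmk : M / 2 ≤ μ.real {x | -s ≤ T x} := by
    have h1 := mul_meas_ge_le_integral_of_nonneg (μ := μ) (f := fun x => max (-T x) 0)
      (Filter.Eventually.of_forall fun x => le_max_right _ _) hn s
    rw [← hpn] at h1
    have h2 : M ≤ μ.real {x | -s ≤ T x} + μ.real {x | s ≤ max (-T x) 0} := by
      refine le_trans (measureReal_mono ?_) (measureReal_union_le _ _)
      intro x _
      rcases le_total (-s) (T x) with h | h
      · exact Or.inl h
      · exact Or.inr (le_trans (show s ≤ -T x by linarith) (le_max_left _ _))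
    have h3 : μ.real {x | s ≤ max (-T x) 0} ≤ M / 2 := by
      by_contra h
      push Not at h
      nlinarith
    linarith
  set L := log (M / (2 * g0)) with hL
  have hL1 : 1 < L := by
    rw [hL, lt_log_iff_exp_lt (by positivity), lt_div_iff₀ (by positivity)]
    linarith
  have hk : 0 < L / s := by positivity
  have hdec : ∀ t : ℝ, 0 < t → μ.real {x | t ≤ T x} ≤ g0 * exp (-(L/s) * t) := by
    intro t ht
    have h1 := hPL s t hsp ht
    set gt := μ.real {x | t ≤ T x} with hgt
    have hgtn : 0 ≤ gt := measureReal_nonneg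
    have h2 : gt ^ (s/(s+t)) * (M/2) ^ (t/(s+t)) ≤ g0 := by
      refine le_trans ?_ h1
      gcongr
    have h3 := rpow_le_rpow (by positivity) h2 (show 0 ≤ (s+t)/s by positivity)
    rw [mul_rpow (by positivity) (by positivity), ← rpow_mul hgtn, ← rpow_mul (by positivity)] at h3
    have e1 : s/(s+t) * ((s+t)/s) = 1 := by field_simp
    have e2 : t/(s+t) * ((s+t)/s) = t/s := by field_simp
    have e3 : (s+t)/s = 1 + t/s := by field_simp
    rw [e1, e2, e3, rpow_one, rpow_add hgp, rpow_one] at h3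
    have h4 : exp (-(L/s)*t) = g0 ^ (t/s) / (M/2) ^ (t/s) := by
      rw [← div_rpow hg0n (by positivity), rpow_def_of_pos (by positivity), hL]
      have : g0 / (M/2) = (M/(2*g0))⁻¹ := by field_simp
      rw [this, log_inv]; congr 1; ring
    rw [h4, ← mul_div_assoc, le_div_iff₀ (by positivity)]
    exact h3
  have hlc := hp.integral_eq_integral_meas_le (Filter.Eventually.of_forall fun x => le_max_right _ _)
  have h5 : I ≤ ∫ t in Set.Ioi (0:ℝ), g0 * exp (-(L/s) * t) := by
    rw [hI, hlc]
    refine integral_mono_of_nonneg (Filter.Eventually.of_forall fun t => measureReal_nonneg)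
      ((integrableOn_exp_mul_Ioi (by linarith) 0).const_mul g0) ?_
    filter_upwards [self_mem_ae_restrict measurableSet_Ioi] with t ht
    refine le_trans (le_of_eq ?_) (hdec t ht)
    congr 1
    ext x
    have ht' : ¬ t ≤ 0 := not_le.2 ht
    simp [le_max_iff, ht']
  rw [integral_const_mul, integral_exp_mul_Ioi (by linarith)] at h5
  simp only [mul_zero, exp_zero] at h5
  have h6 : g0 * (-1 / -(L/s)) = g0 * s / L := by field_simp
  rw [h6, le_div_iff₀ (by positivity)] at h5
  have h7 : I * L * M ≤ g0 * (2 * I) := by rw [← hsM]; nlinarith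
  have h8 : L * M ≤ 2 * g0 := by
    by_contra h; push Not at h; nlinarith
  nlinarith

lemma grunbaum {m : ℕ} {w : EuclideanSpace ℝ (Fin m) → ℝ} (hw : IsLogConcaveFn w)
    (hm : Measurable w) (hint : Integrable w) (θ : EuclideanSpace ℝ (Fin m))
    (hi1 : Integrable fun x => ⟪x, θ⟫ * w x) (hb : ∫ x, ⟪x, θ⟫ * w x = 0) :
    ∫⁻ x, ENNReal.ofReal (w x) ≤
      ENNReal.ofReal (2 * exp 1) * ∫⁻ x in {x | 0 ≤ ⟪x, θ⟫}, ENNReal.ofReal (w x) := by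
  have hmo : Measurable fun x => ENNReal.ofReal (w x) := hm.ennreal_ofReal
  set μ : Measure (EuclideanSpace ℝ (Fin m)) := volume.withDensity fun x => ENNReal.ofReal (w x) with hμ
  have : IsFiniteMeasure μ := isFiniteMeasure_withDensity_ofReal hint.2
  have hTm : Measurable fun x : EuclideanSpace ℝ (Fin m) => ⟪x, θ⟫ := by fun_prop
  have hS : ∀ t, MeasurableSet {x : EuclideanSpace ℝ (Fin m) | t ≤ ⟪x, θ⟫} := fun t =>
    measurableSet_le measurable_const hTm
  have hμS : ∀ t, μ {x | t ≤ ⟪x, θ⟫} =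
      ∫⁻ x, ({x | t ≤ ⟪x, θ⟫} : Set (EuclideanSpace ℝ (Fin m))).indicator (fun x => ENNReal.ofReal (w x)) x := by
    intro t
    rw [hμ, withDensity_apply _ (hS t), lintegral_indicator (hS t)]
  have key := grunbaum_abs μ hTm (by
      rw [hμ, integrable_withDensity_iff hmo (Filter.Eventually.of_forall fun x => ENNReal.ofReal_lt_top)]
      refine hi1.congr (Filter.Eventually.of_forall fun x => ?_)
      simp [ENNReal.toReal_ofReal (hw.1 x)]) (by
      rw [hμ, integral_withDensity_eq_integral_toReal_smul hmo
        (Filter.Eventually.of_forall fun x => ENNReal.ofReal_lt_top), ← hb]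
      congr 1; ext x
      simp [ENNReal.toReal_ofReal (hw.1 x), mul_comm]) (by
      intro s t hs ht
      have e1 : 1 - s/(s+t) = t/(s+t) := by field_simp; ring
      have h1 := pl_eucl (l := s/(s+t)) (by positivity) (by rw [div_lt_one (by positivity)]; linarith)
        (hmo.indicator (hS t)) (hmo.indicator (hS (-s))) (hmo.indicator (hS 0)) (by
          intro x y
          by_cases hx : t ≤ ⟪x, θ⟫
          swap
          · rw [Set.indicator_of_notMem (by exact hx), ENNReal.zero_rpow_of_pos (by positivity)]; simp
          by_cases hy : -s ≤ ⟪y, θ⟫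
          swap
          · rw [Set.indicator_of_notMem (a := y) (by exact hy), ENNReal.zero_rpow_of_pos (by rw [e1]; positivity)]; simp
          rw [Set.indicator_of_mem (by exact hx), Set.indicator_of_mem (by exact hy),
            Set.indicator_of_mem]
          · rw [ENNReal.ofReal_rpow_of_nonneg (hw.1 x) (by positivity),
              ENNReal.ofReal_rpow_of_nonneg (hw.1 y) (by rw [e1]; positivity),
              ← ENNReal.ofReal_mul (rpow_nonneg (hw.1 x) _)]
            exact ENNReal.ofReal_le_ofReal (hw.2 x y _ (by positivity)
              (by rw [div_le_one (by positivity)]; linarith))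
          · show 0 ≤ ⟪_, θ⟫
            rw [e1, inner_add_left, inner_smul_left, inner_smul_left]
            simp only [conj_trivial]
            have : s/(s+t) * t + t/(s+t) * (-s) = 0 := by ring
            rw [← this]
            gcongr)
      rw [e1, ← hμS, ← hμS, ← hμS] at h1
      have h2 := ENNReal.toReal_mono (measure_ne_top _ _) h1
      rw [ENNReal.toReal_mul, ← ENNReal.toReal_rpow, ← ENNReal.toReal_rpow] at h2
      exact h2)
  have h3 : μ Set.univ ≤ ENNReal.ofReal (2 * exp 1) * μ {x | 0 ≤ ⟪x, θ⟫} := by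
    rw [← ENNReal.ofReal_toReal (measure_ne_top μ Set.univ),
      ← ENNReal.ofReal_toReal (measure_ne_top μ {x | 0 ≤ ⟪x, θ⟫}), ← ENNReal.ofReal_mul (by positivity)]
    exact ENNReal.ofReal_le_ofReal key
  rwa [hμ, withDensity_apply _ (hS 0), withDensity_apply _ MeasurableSet.univ, Measure.restrict_univ] at h3

lemma lc_concave {E : Type*} [AddCommGroup E] [Module ℝ E] {w : E → ℝ} (hw : IsLogConcaveFn w) :
    ConcaveOn ℝ {x | 0 < w x} (fun x => log (w x)) := by
  have key : ∀ x, 0 < w x → ∀ y, 0 < w y → ∀ a b : ℝ, 0 ≤ a → 0 ≤ b → a + b = 1 →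
      exp (a * log (w x) + b * log (w y)) ≤ w (a • x + b • y) := by
    intro x hx y hy a b ha hb hab
    have h := hw.2 x y a ha (by linarith)
    have hb' : 1 - a = b := by linarith
    rw [hb', rpow_def_of_pos hx, rpow_def_of_pos hy, ← exp_add] at h
    rw [mul_comm a, mul_comm b]
    exact h
  refine ⟨?_, ?_⟩
  · intro x hx y hy a b ha hb hab
    exact lt_of_lt_of_le (exp_pos _) (key x hx y hy a b ha hb hab)
  · intro x hx y hy a b ha hb hab
    have h := key x hx y hy a b ha hb hab
    rw [← le_log_iff_exp_le (lt_of_lt_of_le (exp_pos _) h)] at h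
    exact h

lemma lc_contOn {m : ℕ} {w : EuclideanSpace ℝ (Fin m) → ℝ} (hw : IsLogConcaveFn w)
    (hU : IsOpen {x | 0 < w x}) : ContinuousOn (fun x => log (w x)) {x | 0 < w x} :=
  (lc_concave hw).continuousOn hU

lemma lc_measurable {m : ℕ} {w : EuclideanSpace ℝ (Fin m) → ℝ} (hw : IsLogConcaveFn w)
    (hU : IsOpen {x | 0 < w x}) : Measurable w := by
  have h1 : ContinuousOn w {x | 0 < w x} := by
    have := continuous_exp.comp_continuousOn (lc_contOn hw hU)
    refine this.congr fun x hx => ?_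
    simp [exp_log hx]
  have h2 := ContinuousOn.measurable_piecewise (g := fun _ => (0:ℝ)) h1 continuousOn_const hU.measurableSet
  classical
  convert h2 using 1
  ext x
  by_cases hx : 0 < w x
  · rw [Set.piecewise_eq_of_mem _ _ _ (by exact hx)]
  · rw [Set.piecewise_eq_of_notMem _ _ _ (by exact hx)]
    exact le_antisymm (not_lt.1 hx) (hw.1 x)

lemma lc_supp {m : ℕ} {w : EuclideanSpace ℝ (Fin m) → ℝ} (hw : IsLogConcaveFn w)
    (hU : IsOpen {x | 0 < w x}) (h0 : 0 < w 0) :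
    ∃ l : EuclideanSpace ℝ (Fin m) →L[ℝ] ℝ, ∀ x, 0 < w x → log (w x) ≤ log (w 0) + l x := by
  set S : Set (EuclideanSpace ℝ (Fin m) × ℝ) := {p | p.1 ∈ {x | 0 < w x} ∧ p.2 < log (w p.1)} with hS
  have hSc : Convex ℝ S := (lc_concave hw).convex_strict_hypograph
  have hSo : IsOpen S := by
    rw [isOpen_iff_mem_nhds]
    rintro ⟨x, r⟩ ⟨hx, hr⟩
    have hc : ContinuousAt (fun x => log (w x)) x := (lc_contOn hw hU).continuousAt (hU.mem_nhds hx)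
    have hc' : ContinuousAt (fun p : EuclideanSpace ℝ (Fin m) × ℝ => log (w p.1)) (x, r) :=
      ContinuousAt.comp (f := Prod.fst) (g := fun x => log (w x)) hc continuousAt_fst
    have e1 : ∀ᶠ p : EuclideanSpace ℝ (Fin m) × ℝ in nhds (x, r), p.2 < log (w p.1) :=
      continuousAt_snd.eventually_lt hc' hr
    have e2 : ∀ᶠ p : EuclideanSpace ℝ (Fin m) × ℝ in nhds (x, r), p.1 ∈ {x | 0 < w x} :=
      continuousAt_fst.eventually (hU.mem_nhds hx)
    filter_upwards [e1, e2] with p h1 h2 using ⟨h2, h1⟩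
  have hn : ((0 : EuclideanSpace ℝ (Fin m)), log (w 0)) ∉ S := fun h => lt_irrefl _ h.2
  obtain ⟨f, hf⟩ := geometric_hahn_banach_open_point hSc hSo hn
  have hdec : ∀ x r, f (x, r) = f (x, 0) + r * f (0, 1) := by
    intro x r
    have : ((x, r) : EuclideanSpace ℝ (Fin m) × ℝ) = (x, 0) + r • (0, 1) := by simp
    rw [this, map_add, map_smul]; simp
  have hz : f ((0 : EuclideanSpace ℝ (Fin m)), (0:ℝ)) = 0 := map_zero f
  set c := f (0, 1) with hc
  have hcp : 0 < c := by
    have := hf (0, log (w 0) - 1) ⟨h0, by simp⟩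
    rw [hdec, hdec 0 (log (w 0)), hz] at this
    linarith
  refine ⟨-(c⁻¹ • (f.comp (ContinuousLinearMap.inl ℝ _ _))), fun x hx => ?_⟩
  have h1 : f (x, 0) + log (w x) * c ≤ log (w 0) * c := by
    refine le_of_forall_pos_le_add fun ε hε => ?_
    have := hf (x, log (w x) - ε / c) ⟨hx, by simp; positivity⟩
    rw [hdec, hdec 0 (log (w 0)), hz, sub_mul, div_mul_cancel₀ _ hcp.ne'] at this
    linarith
  simp only [neg_apply, smul_apply,
    ContinuousLinearMap.comp_apply, ContinuousLinearMap.inl_apply, smul_eq_mul]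
  have h2 : log (w x) * c ≤ (log (w 0) + -(c⁻¹ * f (x, 0))) * c := by
    have : (log (w 0) + -(c⁻¹ * f (x, 0))) * c = log (w 0) * c - f (x, 0) := by field_simp; try ring
    rw [this]; linarith
  exact le_of_mul_le_mul_right h2 hcp

lemma fradelizi {m : ℕ} (hm : 1 ≤ m) {w : EuclideanSpace ℝ (Fin m) → ℝ} (hw : IsLogConcaveFn w)
    (hU : IsOpen {x | 0 < w x}) (h0 : 0 < w 0) (hint : Integrable w) (hpos : 0 < ∫ x, w x)
    (hi1 : Integrable fun x => w x • x) (hb : ∫ x, w x • x = 0) (x0 : EuclideanSpace ℝ (Fin m)) :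
    w x0 ≤ exp (4 * m) * w 0 := by
  have hm' : (1:ℝ) ≤ m := by exact_mod_cast hm
  rcases (hw.1 x0).eq_or_lt with ha | ha
  · rw [← ha]; positivity
  obtain ⟨l, hl⟩ := lc_supp hw hU h0
  set L := log (w x0) - log (w 0) with hL
  set s : ℝ := m / (m+1) with hs
  have hs0 : 0 < s := by positivity
  have hs1 : 1 - s = 1 / (m+1) := by rw [hs]; field_simp; ring
  have hs1' : 0 < 1 - s := by rw [hs1]; positivity
  have hpt : ∀ x, w x * (1 + (1-s) * L) - (1-s) * (l (w x • x)) ≤ w (s • x + (1-s) • x0) := by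
    intro x
    rw [map_smul, smul_eq_mul]
    rcases (hw.1 x).eq_or_lt with hx | hx
    · rw [← hx]; simpa using hw.1 _
    · refine le_trans ?_ (hw.2 x x0 s hs0.le (by linarith))
      rw [rpow_def_of_pos hx, rpow_def_of_pos ha, ← exp_add]
      have e : log (w x) * s + log (w x0) * (1-s) = log (w x) + (1-s) * (log (w x0) - log (w x)) := by ring
      rw [e, exp_add, exp_log hx]
      have h1 := add_one_le_exp ((1-s) * (log (w x0) - log (w x)))
      have h2 := hl x hx
      have h3 : (1-s) * (L - l x) ≤ (1-s) * (log (w x0) - log (w x)) := by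
        apply mul_le_mul_of_nonneg_left _ hs1'.le
        linarith
      have h4 : w x * (1 + (1-s) * (L - l x)) ≤ w x * exp ((1-s) * (log (w x0) - log (w x))) :=
        mul_le_mul_of_nonneg_left (by linarith) hx.le
      refine le_trans (le_of_eq ?_) h4
      ring
  have hil : Integrable fun x => l (w x • x) := l.integrable_comp hi1
  have hish : Integrable fun x => w (s • x + (1-s) • x0) :=
    (Integrable.comp_smul (hint.comp_add_right ((1-s) • x0)) hs0.ne')
  have hmono := integral_mono ((hint.mul_const (1 + (1-s) * L)).sub (hil.const_mul (1-s))) hish hpt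
  simp only [Pi.sub_apply] at hmono
  rw [integral_sub (hint.mul_const _) (hil.const_mul _), integral_mul_const, integral_const_mul,
    l.integral_comp_comm hi1, hb, map_zero, mul_zero, sub_zero] at hmono
  have hcv : ∫ x, w (s • x + (1-s) • x0) = (s ^ m)⁻¹ * ∫ x, w x := by
    have h1 := Measure.integral_comp_smul (volume : Measure (EuclideanSpace ℝ (Fin m)))
      (fun x => w (x + (1-s) • x0)) s
    rw [h1, integral_add_right_eq_self w]
    simp [abs_of_pos hs0]
  rw [hcv, mul_comm] at hmono
  have h1 := le_of_mul_le_mul_right hmono hpos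
  have h2 : (s ^ m)⁻¹ ≤ exp 1 := by
    have h3 : s⁻¹ ≤ exp (1/m) := by
      have := add_one_le_exp (1/(m:ℝ))
      refine le_trans (le_of_eq ?_) this
      rw [hs]; field_simp; try ring
    rw [← inv_pow]
    calc s⁻¹ ^ m ≤ exp (1/m) ^ m := by gcongr
      _ = exp 1 := by rw [← exp_nat_mul]; congr 1; field_simp
  have he := exp_one_lt_d9
  have h5 : L ≤ 4 * m := by
    have h6 : 1 / ((m:ℝ)+1) * L ≤ 1.72 := by rw [← hs1]; linarith
    rw [div_mul_eq_mul_div, one_mul, div_le_iff₀ (by positivity)] at h6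
    linarith
  have h6 : log (w x0) ≤ 4 * m + log (w 0) := by linarith
  rw [log_le_iff_le_exp ha, exp_add, exp_log h0] at h6
  exact h6

lemma lc_decay {m : ℕ} {w : EuclideanSpace ℝ (Fin m) → ℝ} (hw : IsLogConcaveFn w)
    (hU : IsOpen {x | 0 < w x}) (hint : Integrable w) {x0 : EuclideanSpace ℝ (Fin m)} (hx0 : 0 < w x0) :
    ∃ C b : ℝ, 0 < C ∧ 0 < b ∧ ∀ x, w x ≤ C * exp (-b * ‖x‖) := by
  set a := w x0 / 2 with ha
  have hap : 0 < a := by positivity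
  -- a ball on which `w` is bounded below
  obtain ⟨r, hr, hball⟩ : ∃ r, 0 < r ∧ ∀ y, ‖y - x0‖ < r → a ≤ w y := by
    have hc : ContinuousAt (fun x => log (w x)) x0 := (lc_contOn hw hU).continuousAt (hU.mem_nhds hx0)
    have e1 : ∀ᶠ y in nhds x0, log a < log (w y) :=
      continuousAt_const.eventually_lt hc (log_lt_log hap (by linarith))
    have e2 : ∀ᶠ y in nhds x0, 0 < w y := hU.mem_nhds hx0
    obtain ⟨r, hr, h⟩ := Metric.eventually_nhds_iff.1 (e1.and e2)
    refine ⟨r, hr, fun y hy => ?_⟩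
    have := h (y := y) (by rw [dist_eq_norm]; exact hy)
    exact ((log_lt_log_iff hap this.2).1 this.1).le
  set V := volume.real (Metric.ball (0 : EuclideanSpace ℝ (Fin m)) (r/2)) with hV
  have hVp : 0 < V := by
    rw [hV, measureReal_def]
    exact ENNReal.toReal_pos (Metric.measure_ball_pos _ _ (by positivity)).ne' measure_ball_lt_top.ne
  have hVc : ∀ x : EuclideanSpace ℝ (Fin m), volume.real (Metric.ball x (r/2)) = V := fun x => by
    rw [hV, measureReal_def, measureReal_def, Measure.addHaar_ball_center]
  have hmid : ∀ x, w x ^ ((1:ℝ)/2) * a ^ ((1:ℝ)/2) * V ≤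
      ∫ z in Metric.ball (((1:ℝ)/2) • (x + x0)) (r/2), w z := by
    intro x
    rw [← hVc (((1:ℝ)/2) • (x + x0))]
    refine setIntegral_ge_of_const_le_real measurableSet_ball measure_ball_lt_top.ne ?_ hint.integrableOn
    intro z hz
    have h1 : a ≤ w ((2:ℝ) • z - x) := by
      apply hball
      have : (2:ℝ) • z - x - x0 = (2:ℝ) • (z - ((1:ℝ)/2) • (x + x0)) := by
        rw [smul_sub, smul_smul]; norm_num; abel
      rw [this, norm_smul, norm_two]
      rw [Metric.mem_ball, dist_eq_norm] at hz
      linarith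
    have h2 := hw.2 x ((2:ℝ) • z - x) (1/2) (by norm_num) (by norm_num)
    have h3 : ((1:ℝ)/2) • x + (1 - (1:ℝ)/2) • ((2:ℝ) • z - x) = z := by
      rw [smul_sub, smul_smul]; norm_num
    rw [h3] at h2
    refine le_trans ?_ h2
    have h4 : (1:ℝ) - 1/2 = 1/2 := by norm_num
    rw [h4]
    have := hw.1 x
    gcongr
  have hwn : 0 ≤ᵐ[volume] w := Filter.Eventually.of_forall hw.1
  -- boundedness
  obtain ⟨B, hB0, hB⟩ : ∃ B, 0 < B ∧ ∀ x, w x ≤ B := by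
    refine ⟨((∫ z, w z) / (a ^ ((1:ℝ)/2) * V)) ^ (2:ℝ) + 1, ?_, fun x => ?_⟩
    · have : 0 ≤ ∫ z, w z := integral_nonneg fun x => hw.1 x
      positivity
    · have h1 := (hmid x).trans (setIntegral_le_integral hint hwn)
      rw [mul_assoc, ← le_div_iff₀ (by positivity)] at h1
      have h2 := rpow_le_rpow (rpow_nonneg (hw.1 x) _) h1 (show (0:ℝ) ≤ 2 by norm_num)
      rw [← rpow_mul (hw.1 x)] at h2
      norm_num at h2
      norm_num
      linarith
  -- the superlevel set is bounded
  obtain ⟨R, hR0, hR⟩ : ∃ R, 0 < R ∧ ∀ x, R < ‖x - x0‖ → w x < a * exp (-1) := by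
    have ht : Filter.Tendsto (fun n : ℕ => ∫ z in (Metric.closedBall x0 (n:ℝ))ᶜ, w z) Filter.atTop (nhds 0) := by
      have := Antitone.tendsto_setIntegral (μ := volume) (s := fun n : ℕ => (Metric.closedBall x0 (n:ℝ))ᶜ) (f := w)
        (fun n => measurableSet_closedBall.compl) (fun i j hij => Set.compl_subset_compl.2
          (Metric.closedBall_subset_closedBall (by exact_mod_cast hij))) hint.integrableOn
      have he : (⋂ n : ℕ, (Metric.closedBall x0 (n:ℝ))ᶜ) = ∅ := by
        rw [← Set.compl_iUnion, Metric.iUnion_closedBall_nat, Set.compl_univ]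
      rw [he] at this
      simpa using this
    set δ := (a * exp (-1)) ^ ((1:ℝ)/2) * a ^ ((1:ℝ)/2) * V with hδ
    have hδp : 0 < δ := by positivity
    obtain ⟨n, hn⟩ := (ht.eventually (gt_mem_nhds hδp)).exists
    refine ⟨2 * n + r, by positivity, fun x hx => ?_⟩
    by_contra hcon
    push Not at hcon
    have h1 : δ ≤ w x ^ ((1:ℝ)/2) * a ^ ((1:ℝ)/2) * V := by rw [hδ]; gcongr
    have h2 := h1.trans (hmid x)
    have h3 : ∫ z in Metric.ball (((1:ℝ)/2) • (x + x0)) (r/2), w z ≤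
        ∫ z in (Metric.closedBall x0 (n:ℝ))ᶜ, w z := by
      refine setIntegral_mono_set hint.integrableOn (ae_restrict_of_ae hwn) (Filter.Eventually.of_forall ?_)
      intro z hz hz2
      rw [Metric.mem_closedBall, dist_eq_norm] at hz2
      have hz' : z ∈ Metric.ball (((1:ℝ)/2) • (x + x0)) (r/2) := hz
      rw [Metric.mem_ball, dist_eq_norm, norm_sub_rev] at hz'
      have h4 : ((1:ℝ)/2) • (x - x0) = (((1:ℝ)/2) • (x + x0) - z) + (z - x0) := by
        have : x0 = ((1:ℝ)/2) • x0 + ((1:ℝ)/2) • x0 := by rw [← add_smul]; norm_num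
        rw [smul_sub, smul_add]
        nth_rewrite 3 [this]
        abel
      have h5 := norm_add_le (((1:ℝ)/2) • (x + x0) - z) (z - x0)
      rw [← h4, norm_smul, norm_div, norm_one, norm_two] at h5
      linarith
    linarith
  set ρ := R + 1 with hρ
  have hρp : 0 < ρ := by positivity
  have hax0 : a ≤ w x0 := by linarith
  have hmain : ∀ x, w x ≤ (B * exp 1 + a) * exp (-(‖x - x0‖/ρ)) := by
    intro x
    rcases le_or_gt (‖x - x0‖) ρ with h | h
    · have h1 : exp (-1) ≤ exp (-(‖x - x0‖/ρ)) := by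
        rw [exp_le_exp, neg_le_neg_iff, div_le_one hρp]; exact h
      have h2 : B * exp 1 * exp (-1) = B := by rw [mul_assoc, ← exp_add]; simp
      calc w x ≤ B := hB x
        _ = B * exp 1 * exp (-1) := h2.symm
        _ ≤ (B * exp 1 + a) * exp (-(‖x - x0‖/ρ)) := by gcongr; linarith
    · rcases (hw.1 x).eq_or_lt with hx | hx
      · rw [← hx]; positivity
      have hnp : 0 < ‖x - x0‖ := hρp.trans h
      set s := ρ / ‖x - x0‖ with hs
      have hs0 : 0 < s := by positivity
      have hs1 : s ≤ 1 := by rw [hs, div_le_one hnp]; exact h.le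
      have h1 := hw.2 x x0 s hs0.le hs1
      have h2 : w (s • x + (1-s) • x0) < a * exp (-1) := by
        apply hR
        have : s • x + (1-s) • x0 - x0 = s • (x - x0) := by
          rw [sub_smul, one_smul, smul_sub]; abel
        rw [this, norm_smul, norm_of_nonneg hs0.le, hs, div_mul_cancel₀ _ hnp.ne']
        linarith
      have h3 := h1.trans h2.le
      rw [rpow_def_of_pos hx, rpow_def_of_pos hx0, ← exp_add, ← exp_log hap, ← exp_add, exp_le_exp] at h3
      have h4 : log a ≤ log (w x0) := log_le_log hap hax0
      have h5 : log (w x) * s + log a * (1-s) ≤ log a + -1 := by nlinarith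
      have h6 : log (w x) ≤ log a - ‖x - x0‖/ρ := by
        have h7 : (log (w x) - log a) * s ≤ -1 := by linarith
        have h8 : s * (‖x - x0‖/ρ) = 1 := by rw [hs]; field_simp
        by_contra hc
        push Not at hc
        have : (-(‖x - x0‖/ρ)) * s < (log (w x) - log a) * s := by
          apply mul_lt_mul_of_pos_right _ hs0; linarith
        linarith
      rw [log_le_iff_le_exp hx, sub_eq_add_neg, exp_add, exp_log hap] at h6
      refine h6.trans ?_
      have : 0 ≤ B * exp 1 := by positivity
      gcongr
      linarith
  refine ⟨(B * exp 1 + a) * exp (‖x0‖/ρ), 1/ρ, by positivity, by positivity, fun x => (hmain x).trans ?_⟩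
  rw [mul_assoc, ← exp_add]
  gcongr
  have := norm_sub_norm_le x x0
  have h9 : (‖x‖ - ‖x0‖)/ρ ≤ ‖x - x0‖/ρ := by gcongr
  rw [sub_div] at h9
  have : -(1/ρ) * ‖x‖ = - (‖x‖/ρ) := by ring
  rw [this]
  linarith

lemma decay_moment {m : ℕ} {w : EuclideanSpace ℝ (Fin m) → ℝ} (h0 : ∀ x, 0 ≤ w x) (hm : Measurable w)
    {C b : ℝ} (hC : 0 < C) (hb : 0 < b) (h : ∀ x, w x ≤ C * exp (-b * ‖x‖)) :
    Integrable fun x => w x • x := by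
  have hi := integrable_one_add_norm (μ := (volume : Measure (EuclideanSpace ℝ (Fin m)))) (r := (m:ℝ)+1)
    (by simp)
  refine Integrable.mono' (hi.const_mul (C * exp b * (Nat.factorial (m+2)) / b ^ (m+2)))
    (hm.smul measurable_id).aestronglyMeasurable (Filter.Eventually.of_forall fun x => ?_)
  rw [norm_smul, norm_of_nonneg (h0 x)]
  set t := ‖x‖ with ht
  have ht0 : 0 ≤ t := norm_nonneg x
  have h1 := pow_div_factorial_le_exp (x := b * (1+t)) (by positivity) (m+2)
  have hf : (0:ℝ) < (Nat.factorial (m+2)) := by exact_mod_cast Nat.factorial_pos _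
  rw [div_le_iff₀ hf, mul_pow] at h1
  have h2 : exp (-b * t) = exp b / exp (b * (1+t)) := by rw [← exp_sub]; congr 1; ring
  have h3 : (1+t) ^ (-((m:ℝ)+1)) = 1 / (1+t)^(m+1) := by
    rw [rpow_neg (by positivity)]; norm_cast; simp
  calc w x * t ≤ C * exp (-b * t) * (1+t) := by
        have := h x
        gcongr
        linarith
    _ ≤ _ := by
        rw [h2, h3]
        have : C * (exp b / exp (b * (1+t))) * (1+t) = (C * exp b * (1 + t)) / exp (b*(1+t)) := by ring
        rw [this, div_mul_div_comm, mul_one, div_le_div_iff₀ (exp_pos _) (by positivity)]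
        have h4 : C * exp b * (b^(m+2) * (1+t)^(m+2)) ≤ C * exp b * (exp (b*(1+t)) * (Nat.factorial (m+2))) := by
          gcongr
        refine le_trans (le_of_eq ?_) (h4.trans (le_of_eq ?_)) <;> ring

lemma decay_ray {m : ℕ} {w : EuclideanSpace ℝ (Fin m) → ℝ} (h0 : ∀ x, 0 ≤ w x) (hm : Measurable w)
    {C b : ℝ} (hb : 0 < b) (h : ∀ x, w x ≤ C * exp (-b * ‖x‖)) {x : EuclideanSpace ℝ (Fin m)}
    (hx : x ≠ 0) {p : ℝ} (hp : 0 < p) :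
    IntegrableOn (fun t : ℝ => t ^ (p-1) * w (t • x)) (Set.Ioi 0) := by
  have hxp : 0 < ‖x‖ := norm_pos_iff.2 hx
  have hi := integrableOn_rpow_mul_exp_neg_mul_rpow (p := 1) (s := p-1) (b := b * ‖x‖) (by linarith)
    one_pos (by positivity)
  refine Integrable.mono' (hi.const_mul C) ?_ ?_
  · have : Measurable fun t : ℝ => t ^ (p-1) * w (t • x) := by
      have := hm.comp (measurable_id.smul_const x : Measurable fun t : ℝ => t • x)
      exact (measurable_id.pow_const _).mul this
    exact this.aestronglyMeasurable
  · filter_upwards [self_mem_ae_restrict measurableSet_Ioi] with t ht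
    have ht' : 0 < t := ht
    rw [norm_of_nonneg (mul_nonneg (rpow_nonneg ht'.le _) (h0 _))]
    have h1 := h (t • x)
    rw [norm_smul, norm_of_nonneg ht'.le] at h1
    rw [rpow_one]
    calc t ^ (p-1) * w (t • x) ≤ t ^ (p-1) * (C * exp (-b * (t * ‖x‖))) := by gcongr
      _ = C * (t ^ (p-1) * exp (-(b * ‖x‖) * t)) := by
        have : -b * (t * ‖x‖) = -(b * ‖x‖) * t := by ring
        rw [this]; ring

lemma lc_regularize {m : ℕ} {w : EuclideanSpace ℝ (Fin m) → ℝ} (hw : IsLogConcaveFn w)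
    (hint : Integrable w) (hpos : 0 < ∫ x, w x) (hb : ∫ x, w x • x = 0) :
    ∃ v : EuclideanSpace ℝ (Fin m) → ℝ, IsLogConcaveFn v ∧ IsOpen {x | 0 < v x} ∧ 0 < v 0 ∧
      Measurable v ∧ Integrable v ∧ 0 < ∫ x, v x ∧ Integrable (fun x => v x • x) ∧ ∫ x, v x • x = 0 ∧
      (∃ C b : ℝ, 0 < C ∧ 0 < b ∧ ∀ x, v x ≤ C * exp (-b * ‖x‖)) ∧
      ∀ p, ballBody w p = ballBody v p := by
  classical
  set P : Set (EuclideanSpace ℝ (Fin m)) := {x | 0 < w x} with hP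
  have hPc : Convex ℝ P := (lc_concave hw).1
  set U := interior P with hUdef
  have hUc : Convex ℝ U := hPc.interior
  set v := U.indicator w with hv
  have hvU : ∀ x, x ∈ U → v x = w x := fun x hx => Set.indicator_of_mem hx _
  have hvn : ∀ x, x ∉ U → v x = 0 := fun x hx => Set.indicator_of_notMem hx _
  have hwU : ∀ x, x ∈ U → 0 < w x := fun x hx => (interior_subset hx : x ∈ P)
  have hv0 : ∀ x, 0 ≤ v x := fun x => Set.indicator_nonneg (fun x _ => hw.1 x) x
  have hset : {x | 0 < v x} = U := by
    ext x
    constructor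
    · intro hx
      by_contra hxU
      have : 0 < v x := hx
      rw [hvn x hxU] at this
      exact lt_irrefl _ this
    · intro hx
      show 0 < v x
      rw [hvU x hx]; exact hwU x hx
  have hne : ∀ x, v x ≠ w x → x ∈ P ∧ x ∉ U := by
    intro x hx
    have hxU : x ∉ U := fun h => hx (hvU x h)
    refine ⟨?_, hxU⟩
    rw [hvn x hxU] at hx
    exact lt_of_le_of_ne (hw.1 x) hx
  have hvlc : IsLogConcaveFn v := by
    refine ⟨hv0, fun x y l hl0 hl1 => ?_⟩
    rcases hl0.eq_or_lt with h | hl0'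
    · rw [← h]; simp
    rcases hl1.eq_or_lt with h | hl1'
    · rw [h]; simp
    by_cases hx : x ∈ U
    swap
    · rw [hvn x hx, zero_rpow hl0'.ne']; simpa using hv0 _
    by_cases hy : y ∈ U
    swap
    · rw [hvn y hy, zero_rpow (by linarith)]; simpa using hv0 _
    rw [hvU x hx, hvU y hy, hvU _ (hUc hx hy hl0 (by linarith) (by ring))]
    exact hw.2 x y l hl0 hl1
  have hUo : IsOpen {x | 0 < v x} := by rw [hset]; exact isOpen_interior
  have hvm : Measurable v := lc_measurable hvlc hUo
  have hae : v =ᵐ[volume] w := by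
    have h1 := hPc.addHaar_frontier (volume : Measure (EuclideanSpace ℝ (Fin m)))
    refine measure_mono_null ?_ h1
    intro x hx
    have h2 := hne x hx
    exact ⟨subset_closure h2.1, h2.2⟩
  have hvint : Integrable v := hint.congr hae.symm
  have hveq : ∫ x, v x = ∫ x, w x := integral_congr_ae hae
  have hvpos : 0 < ∫ x, v x := by rw [hveq]; exact hpos
  obtain ⟨x0, hx0⟩ : ∃ x0, 0 < v x0 := by
    by_contra hcon
    push Not at hcon
    have : v = 0 := funext fun x => le_antisymm (hcon x) (hv0 x)
    rw [this] at hvpos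
    simp at hvpos
  obtain ⟨C, b, hC, hb0, hdec⟩ := lc_decay hvlc hUo hvint hx0
  have hmom := decay_moment hv0 hvm hC hb0 hdec
  have hvb : ∫ x, v x • x = 0 := by
    rw [← hb]
    apply integral_congr_ae
    filter_upwards [hae] with x hx
    rw [hx]
  have h0U : (0 : EuclideanSpace ℝ (Fin m)) ∈ U := by
    by_contra h0
    obtain ⟨f, hf⟩ := geometric_hahn_banach_point_open hUc isOpen_interior h0
    rw [map_zero] at hf
    have hi : ∫ x, f (v x • x) = 0 := by rw [f.integral_comp_comm hmom, hvb, map_zero]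
    have hnn : ∀ x, 0 ≤ f (v x • x) := by
      intro x
      rw [map_smul, smul_eq_mul]
      by_cases hx : x ∈ U
      · exact mul_nonneg (hv0 x) (hf x hx).le
      · rw [hvn x hx]; simp
    rw [integral_eq_zero_iff_of_nonneg hnn (f.integrable_comp hmom)] at hi
    have hU0 : volume U = 0 := by
      refine measure_mono_null ?_ hi
      intro x hx hx2
      have hx3 : f (v x • x) = 0 := hx2
      rw [map_smul, smul_eq_mul, hvU x hx] at hx3
      have := mul_pos (hwU x hx) (hf x hx)
      linarith
    have hx0U : x0 ∈ U := by rw [← hset]; exact hx0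
    exact (isOpen_interior.measure_pos volume ⟨x0, hx0U⟩).ne' hU0
  refine ⟨v, hvlc, hUo, ?_, hvm, hvint, hvpos, hmom, hvb, ⟨C, b, hC, hb0, hdec⟩, fun p => ?_⟩
  · rw [hvU 0 h0U]; exact hwU 0 h0U
  · ext x
    unfold ballBody
    have : ∫ t in Set.Ioi (0:ℝ), t ^ (p-1) * w (t • x) = ∫ t in Set.Ioi (0:ℝ), t ^ (p-1) * v (t • x) := by
      apply integral_congr_ae
      have hsub : Set.Subsingleton {t : ℝ | 0 < t ∧ v (t • x) ≠ w (t • x)} := by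
        have key : ∀ s t : ℝ, 0 < s → s < t → v (s • x) ≠ w (s • x) → v (t • x) ≠ w (t • x) → False := by
          intro s t hs hst h1 h2
          apply (hne _ h1).2
          have ht : 0 < t := hs.trans hst
          apply hPc.openSegment_interior_self_subset_interior h0U (hne _ h2).1
          refine ⟨1 - s/t, s/t, ?_, by positivity, by ring, ?_⟩
          · rw [sub_pos, div_lt_one ht]; exact hst
          · rw [smul_zero, zero_add, smul_smul, div_mul_cancel₀ _ ht.ne']
        intro s hs t ht
        rcases lt_trichotomy s t with h | h | h
        · exact (key s t hs.1 h hs.2 ht.2).elim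
        · exact h
        · exact (key t s ht.1 h ht.2 hs.2).elim
      have h0 := hsub.measure_zero volume
      have h1 : ∀ᵐ t : ℝ, ¬ (0 < t ∧ v (t • x) ≠ w (t • x)) := by
        rw [ae_iff]; simpa only [not_not] using h0
      filter_upwards [self_mem_ae_restrict measurableSet_Ioi, ae_restrict_of_ae h1] with t ht h2
      have : v (t • x) = w (t • x) := by
        by_contra h3
        exact h2 ⟨ht, h3⟩
      rw [this]
    show 1 ≤ p * _ ↔ 1 ≤ p * _
    rw [this]

lemma ballBody_ray {m : ℕ} {v : EuclideanSpace ℝ (Fin m) → ℝ} (h0 : ∀ x, 0 ≤ v x) {p : ℝ} (hp : 0 < p)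
    (φ : EuclideanSpace ℝ (Fin m)) {r : ℝ} (hr : 0 < r) :
    r • φ ∈ ballBody v p ↔ r ≤ (p * ∫ t in Set.Ioi (0:ℝ), t ^ (p-1) * v (t • φ)) ^ (1/p) := by
  have h1 := integral_comp_mul_right_Ioi (fun u => u ^ (p-1) * v (u • φ)) 0 hr
  rw [zero_mul] at h1
  have h2 : ∫ t in Set.Ioi (0:ℝ), (t * r) ^ (p-1) * v ((t * r) • φ) =
      r ^ (p-1) * ∫ t in Set.Ioi (0:ℝ), t ^ (p-1) * v (t • (r • φ)) := by
    rw [← integral_const_mul]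
    refine setIntegral_congr_fun measurableSet_Ioi fun t ht => ?_
    rw [mul_rpow (le_of_lt ht) hr.le, smul_smul]; ring
  rw [h2, smul_eq_mul] at h1
  have hI : 0 ≤ ∫ t in Set.Ioi (0:ℝ), t ^ (p-1) * v (t • φ) :=
    setIntegral_nonneg measurableSet_Ioi fun t ht => mul_nonneg (rpow_nonneg (le_of_lt ht) _) (h0 _)
  set I := ∫ t in Set.Ioi (0:ℝ), t ^ (p-1) * v (t • φ) with hIdef
  set J := ∫ t in Set.Ioi (0:ℝ), t ^ (p-1) * v (t • (r • φ)) with hJ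
  have hrp : 0 < r ^ p := by positivity
  have h3 : r ^ p * J = I := by
    have : r ^ p = r * r ^ (p-1) := by rw [rpow_sub_one hr.ne']; field_simp
    rw [this, mul_assoc, h1]; field_simp
  have h4 : r • φ ∈ ballBody v p ↔ 1 ≤ p * J := Iff.rfl
  rw [h4]
  have h5 : r ≤ (p * I) ^ (1/p) ↔ r ^ p ≤ p * I := by
    rw [one_div]; exact le_rpow_inv_iff_of_pos hr.le (by positivity) hp
  rw [h5, ← h3]
  constructor
  · intro h; nlinarith
  · intro h; by_contra hc; push Not at hc; nlinarith

lemma ballBody_measurable {m : ℕ} {v : EuclideanSpace ℝ (Fin m) → ℝ} (hv : Measurable v) (p : ℝ) :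
    MeasurableSet (ballBody v p) := by
  have h1 : Measurable fun z : EuclideanSpace ℝ (Fin m) × ℝ => z.2 ^ (p-1) * v (z.2 • z.1) := by
    have : Measurable fun z : EuclideanSpace ℝ (Fin m) × ℝ => v (z.2 • z.1) :=
      hv.comp (measurable_snd.smul measurable_fst)
    exact (measurable_snd.pow_const _).mul this
  have h2 : StronglyMeasurable fun x => ∫ t in Set.Ioi (0:ℝ), t ^ (p-1) * v (t • x) :=
    h1.stronglyMeasurable.integral_prod_right' (ν := volume.restrict (Set.Ioi (0:ℝ)))
  exact measurableSet_le measurable_const (h2.measurable.const_mul p)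

lemma lintegral_pow_Ioc {m : ℕ} (hm : 1 ≤ m) {ρ : ℝ} (hρ : 0 ≤ ρ) :
    ∫⁻ r in Set.Ioc (0:ℝ) ρ, ENNReal.ofReal (r ^ (m-1)) = ENNReal.ofReal (ρ ^ m / m) := by
  have hi : IntegrableOn (fun r : ℝ => r ^ (m-1)) (Set.Ioc 0 ρ) :=
    (intervalIntegrable_iff_integrableOn_Ioc_of_le hρ).1 (Continuous.intervalIntegrable (by fun_prop) 0 ρ)
  rw [← ofReal_integral_eq_lintegral_ofReal hi, ← intervalIntegral.integral_of_le hρ, integral_pow]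
  · have : m - 1 + 1 = m := by omega
    rw [this, zero_pow (by omega), sub_zero]
    congr 2
    have : ((m - 1 : ℕ) : ℝ) + 1 = m := by exact_mod_cast this
    exact this
  · filter_upwards [self_mem_ae_restrict measurableSet_Ioc] with r hr
    exact pow_nonneg hr.1.le _

lemma cone_compare {m : ℕ} (hm : 1 ≤ m) {q : ℝ} (hq : 1 ≤ q) {v : EuclideanSpace ℝ (Fin m) → ℝ}
    (hv : IsLogConcaveFn v) (hv0 : 0 < v 0) (hvm : Measurable v)
    (hM : ∀ x, v x ≤ exp (4 * m) * v 0)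
    {D b : ℝ} (hb : 0 < b) (hdec : ∀ x, v x ≤ D * exp (-b * ‖x‖))
    {C : Set (EuclideanSpace ℝ (Fin m))} (hC : MeasurableSet C)
    (hcone : ∀ x, ∀ r : ℝ, 0 < r → (r • x ∈ C ↔ x ∈ C)) :
    ENNReal.ofReal (cA m q (v 0)) * ∫⁻ x in C, ENNReal.ofReal (v x) ≤ volume (ballBody v (m+q) ∩ C) ∧
    volume (ballBody v (m+q) ∩ C) ≤ ENNReal.ofReal (cB m q (v 0)) * ∫⁻ x in C, ENNReal.ofReal (v x) := by
  classical
  have hm' : (1:ℝ) ≤ m := by exact_mod_cast hm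
  set p : ℝ := m + q with hp
  have hp0 : 0 < p := by linarith
  have hKm : MeasurableSet (ballBody v p ∩ C) := (ballBody_measurable hvm p).inter hC
  have hL : ∫⁻ x in C, ENNReal.ofReal (v x) =
      ∫⁻ φ : Metric.sphere (0 : EuclideanSpace ℝ (Fin m)) 1,
        (if (φ : EuclideanSpace ℝ (Fin m)) ∈ C then
          ENNReal.ofReal (∫ t in Set.Ioi (0:ℝ), t ^ ((m:ℝ)-1) * v (t • (φ : EuclideanSpace ℝ (Fin m)))) else 0)
        ∂((volume : Measure (EuclideanSpace ℝ (Fin m))).toSphere) := by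
    rw [← lintegral_indicator hC, polar_lintegral hm _ (hvm.ennreal_ofReal.indicator hC)]
    congr 1; ext φ
    have hφ : (φ : EuclideanSpace ℝ (Fin m)) ≠ 0 := by
      intro h
      have := φ.2
      rw [h] at this
      simp at this
    split_ifs with hφC
    · rw [ofReal_integral_eq_lintegral_ofReal (decay_ray hv.1 hvm hb hdec hφ (by linarith))]
      · refine setLIntegral_congr_fun measurableSet_Ioi fun r hr => ?_
        have hr' : (0:ℝ) < r := hr
        try simp only
        rw [Set.indicator_of_mem ((hcone _ r hr').2 hφC), ← ENNReal.ofReal_mul (by positivity)]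
        congr 2
        rw [← rpow_natCast]; congr 1
        rw [Nat.cast_sub hm]; simp
      · filter_upwards [self_mem_ae_restrict measurableSet_Ioi] with r hr
        exact mul_nonneg (rpow_nonneg (le_of_lt hr) _) (hv.1 _)
    · rw [setLIntegral_congr_fun (g := fun _ => 0) measurableSet_Ioi]
      · simp
      · intro r hr
        try simp only
        rw [Set.indicator_of_notMem (fun h => hφC ((hcone _ r hr).1 h)), mul_zero]
  have hK : volume (ballBody v p ∩ C) =
      ∫⁻ φ : Metric.sphere (0 : EuclideanSpace ℝ (Fin m)) 1,
        (if (φ : EuclideanSpace ℝ (Fin m)) ∈ C then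
          ENNReal.ofReal ((p * ∫ t in Set.Ioi (0:ℝ), t ^ (p-1) * v (t • (φ : EuclideanSpace ℝ (Fin m)))) ^ ((m:ℝ)/p) / m) else 0)
        ∂((volume : Measure (EuclideanSpace ℝ (Fin m))).toSphere) := by
    rw [← lintegral_indicator_one hKm, polar_lintegral hm _ (measurable_one.indicator hKm)]
    congr 1; ext φ
    have hI : 0 ≤ ∫ t in Set.Ioi (0:ℝ), t ^ (p-1) * v (t • (φ : EuclideanSpace ℝ (Fin m))) :=
      setIntegral_nonneg measurableSet_Ioi fun t ht => mul_nonneg (rpow_nonneg (le_of_lt ht) _) (hv.1 _)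
    split_ifs with hφC
    · set ρ := (p * ∫ t in Set.Ioi (0:ℝ), t ^ (p-1) * v (t • (φ : EuclideanSpace ℝ (Fin m)))) ^ (1/p) with hρ
      have hρ0 : 0 ≤ ρ := by positivity
      have e1 : (p * ∫ t in Set.Ioi (0:ℝ), t ^ (p-1) * v (t • (φ : EuclideanSpace ℝ (Fin m)))) ^ ((m:ℝ)/p) = ρ ^ m := by
        rw [hρ, ← rpow_natCast, ← rpow_mul (by positivity)]; congr 1; ring
      rw [e1, ← lintegral_pow_Ioc hm hρ0, ← lintegral_indicator measurableSet_Ioi,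
        ← lintegral_indicator measurableSet_Ioc]
      congr 1; ext r
      by_cases hr : 0 < r
      · rw [Set.indicator_of_mem (show r ∈ Set.Ioi (0:ℝ) from hr)]
        by_cases hr2 : r ≤ ρ
        · rw [Set.indicator_of_mem, Set.indicator_of_mem (show r ∈ Set.Ioc 0 ρ from ⟨hr, hr2⟩)]
          · simp
          · exact ⟨(ballBody_ray hv.1 hp0 _ hr).2 hr2, (hcone _ r hr).2 hφC⟩
        · rw [Set.indicator_of_notMem, Set.indicator_of_notMem (fun h => hr2 h.2), mul_zero]
          exact fun h => hr2 ((ballBody_ray hv.1 hp0 _ hr).1 h.1)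
      · rw [Set.indicator_of_notMem (show r ∉ Set.Ioi (0:ℝ) from fun h => hr h),
          Set.indicator_of_notMem (show r ∉ Set.Ioc 0 ρ from fun h => hr h.1)]
    · rw [setLIntegral_congr_fun (g := fun _ => 0) measurableSet_Ioi]
      · simp
      · intro r hr
        try simp only
        rw [Set.indicator_of_notMem (fun h => hφC ((hcone _ r hr).1 h.2)), mul_zero]
  have hcmp : ∀ φ : Metric.sphere (0 : EuclideanSpace ℝ (Fin m)) 1, _ := fun φ =>
    ray_compare hm hq (f := fun t : ℝ => v (t • (φ : EuclideanSpace ℝ (Fin m))))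
      (by simpa using hv0) (fun t => hv.1 _) (by simpa using fun t : ℝ => hM (t • (φ : EuclideanSpace ℝ (Fin m))))
      (by
        intro t _ s hs0 hs1
        have := hv.2 (t • (φ : EuclideanSpace ℝ (Fin m))) 0 s hs0 hs1
        simpa [smul_smul] using this)
      (decay_ray hv.1 hvm hb hdec (by
        intro h
        have := φ.2
        rw [h] at this
        simp at this) (by linarith))
      (by
        have := decay_ray hv.1 hvm hb hdec (x := (φ : EuclideanSpace ℝ (Fin m))) (p := p) (by
          intro h
          have := φ.2
          rw [h] at this
          simp at this) hp0
        exact this)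
  simp only [zero_smul, ← hp] at hcmp
  have hcA : 0 ≤ cA m q (v 0) := (cA_pos hv0).le
  have hcB : 0 ≤ cB m q (v 0) := by unfold cB; have := (Real.Gamma_pos_of_pos (show (0:ℝ) < m + 1 by linarith)).le; have := (Real.Gamma_pos_of_pos (show (0:ℝ) < m + q + 1 by linarith)).le; positivity
  constructor
  · rw [hL, hK, ← lintegral_const_mul' _ _ ENNReal.ofReal_ne_top]
    refine lintegral_mono fun φ => ?_
    split_ifs with h
    · rw [← ENNReal.ofReal_mul hcA]
      refine ENNReal.ofReal_le_ofReal ?_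
      rw [le_div_iff₀ (by linarith)]
      have := (hcmp φ).1
      linarith
    · simp
  · rw [hL, hK, ← lintegral_const_mul' _ _ ENNReal.ofReal_ne_top]
    refine lintegral_mono fun φ => ?_
    split_ifs with h
    · rw [← ENNReal.ofReal_mul hcB]
      refine ENNReal.ofReal_le_ofReal ?_
      rw [div_le_iff₀ (by linarith)]
      have := (hcmp φ).2
      linarith
    · simp

/-- halfspace proportion of Ball's body `K_{m+q}(w)` is bounded below. -/
theorem statement19 :
    ∃ c : ℝ, 0 < c ∧
      ∀ (m : ℕ), 1 ≤ m →
      ∀ (w : EuclideanSpace ℝ (Fin m) → ℝ),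
        IsLogConcaveFn w → Integrable w → 0 < ∫ x, w x → 0 < w 0 →
        (∫ x, w x • x) = 0 →
        ∀ q : ℝ, 1 ≤ q →
        ∀ θ : EuclideanSpace ℝ (Fin m), ‖θ‖ = 1 →
          c ≤ ((volume (ballBody w ((m : ℝ) + q) ∩ {x | 0 ≤ ⟪x, θ⟫})).toReal /
                (volume (ballBody w ((m : ℝ) + q))).toReal) ^ (1/q) := by
  refine ⟨exp (-8), exp_pos _, ?_⟩
  intro m hm w hw hint hpos _ hb q hq θ _
  obtain ⟨v, hv, hUo, hv0, hvm, hvint, hvpos, hmom, hvb, ⟨D, b, hD, hb0, hdec⟩, hball⟩ :=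
    lc_regularize hw hint hpos hb
  rw [hball]
  have hM := fradelizi hm hv hUo hv0 hvint hvpos hmom hvb
  have hTm : Measurable fun x : EuclideanSpace ℝ (Fin m) => ⟪x, θ⟫ := by fun_prop
  have hCm : MeasurableSet {x : EuclideanSpace ℝ (Fin m) | 0 ≤ ⟪x, θ⟫} :=
    measurableSet_le measurable_const hTm
  set K := ballBody v ((m:ℝ) + q) with hK
  set H := {x : EuclideanSpace ℝ (Fin m) | 0 ≤ ⟪x, θ⟫} with hH
  have h1 := cone_compare hm hq hv hv0 hvm hM hb0 hdec hCm (by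
    intro x r hr
    show 0 ≤ ⟪r • x, θ⟫ ↔ 0 ≤ ⟪x, θ⟫
    rw [inner_smul_left]
    simp only [conj_trivial]
    exact mul_nonneg_iff_of_pos_left hr)
  have h2 := cone_compare hm hq hv hv0 hvm hM hb0 hdec MeasurableSet.univ (by simp)
  rw [Set.inter_univ, Measure.restrict_univ] at h2
  have hinn : ∀ x, ⟪x, θ⟫ * v x = innerSL ℝ θ (v x • x) := by
    intro x
    rw [innerSL_apply_apply, inner_smul_right, real_inner_comm]; ring
  have h3 := grunbaum hv hvm hvint θ (by
    simp_rw [hinn]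
    exact (innerSL ℝ θ).integrable_comp hmom) (by
    simp_rw [hinn]
    rw [(innerSL ℝ θ).integral_comp_comm hmom, hvb, map_zero])
  have hMeq : ENNReal.ofReal (∫ x, v x) = ∫⁻ x, ENNReal.ofReal (v x) :=
    ofReal_integral_eq_lintegral_ofReal hvint (Filter.Eventually.of_forall hv.1)
  set M := ∫⁻ x, ENNReal.ofReal (v x) with hMdef
  have hM0 : M ≠ 0 := by rw [← hMeq]; simpa using hvpos
  have hMt : M ≠ ⊤ := by rw [← hMeq]; exact ENNReal.ofReal_ne_top
  have hcA := cA_pos (m := m) (q := q) hv0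
  have hKt : volume K ≠ ⊤ := ne_top_of_le_ne_top (ENNReal.mul_ne_top ENNReal.ofReal_ne_top hMt) h2.2
  have hK0 : volume K ≠ 0 := by
    intro h
    have := h2.1
    rw [h, nonpos_iff_eq_zero, mul_eq_zero] at this
    rcases this with h | h
    · rw [ENNReal.ofReal_eq_zero] at h; linarith
    · exact hM0 h
  have hKH : volume (K ∩ H) ≠ ⊤ := ne_top_of_le_ne_top hKt (measure_mono Set.inter_subset_left)
  have h4 : volume K ≤ ENNReal.ofReal (exp (6 * q) * (2 * exp 1)) * volume (K ∩ H) := by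
    set N := ∫⁻ x in H, ENNReal.ofReal (v x) with hN
    calc volume K ≤ ENNReal.ofReal (cB m q (v 0)) * M := h2.2
      _ ≤ ENNReal.ofReal (exp (6 * q) * cA m q (v 0)) * (ENNReal.ofReal (2 * exp 1) * N) :=
        mul_le_mul' (ENNReal.ofReal_le_ofReal (cB_le hm hq hv0)) h3
      _ = ENNReal.ofReal (exp (6 * q) * (2 * exp 1)) * (ENNReal.ofReal (cA m q (v 0)) * N) := by
        rw [ENNReal.ofReal_mul (q := cA m q (v 0)) (exp_pos _).le,
          ENNReal.ofReal_mul (q := 2 * exp 1) (exp_pos _).le]; ring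
      _ ≤ _ := by gcongr; exact h1.1
  have h5 := ENNReal.toReal_mono (ENNReal.mul_ne_top ENNReal.ofReal_ne_top hKH) h4
  rw [ENNReal.toReal_mul, ENNReal.toReal_ofReal (by positivity)] at h5
  have hKp : 0 < (volume K).toReal := ENNReal.toReal_pos hK0 hKt
  have h6 : exp (-8) ^ q ≤ (volume (K ∩ H)).toReal / (volume K).toReal := by
    rw [le_div_iff₀ hKp, ← exp_mul]
    have he : 2 * exp 1 ≤ exp (2 * q) := by
      have h7 : (2:ℝ) ≤ exp 1 := by have := add_one_le_exp (1:ℝ); linarith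
      calc 2 * exp 1 ≤ exp 1 * exp 1 := by gcongr
        _ = exp 2 := by rw [← exp_add]; norm_num
        _ ≤ exp (2 * q) := by rw [exp_le_exp]; linarith
    have h8 : exp (6 * q) * (2 * exp 1) ≤ exp (8 * q) := by
      calc exp (6 * q) * (2 * exp 1) ≤ exp (6*q) * exp (2 * q) := by gcongr
        _ = exp (8 * q) := by rw [← exp_add]; congr 1; ring
    calc exp (-8 * q) * (volume K).toReal
        ≤ exp (-8 * q) * (exp (8 * q) * (volume (K ∩ H)).toReal) := by
          gcongr
          exact h5.trans (by gcongr)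
      _ = (volume (K ∩ H)).toReal := by
          rw [← mul_assoc, ← exp_add]; simp
  have h9 := rpow_le_rpow (by positivity) h6 (show 0 ≤ 1/q by positivity)
  rw [← rpow_mul (by positivity), mul_one_div_cancel (by linarith), rpow_one] at h9
  exact h9
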